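/- If (G_0',ψ') is a (2,2,0)-gain-tight ℤ_2-gain graph and (G_0,ψ) is a ℤ_2-gain graph obtained from (G_0',ψ') by applying any one of the operations H1a, H1b, H1c, H2a, H2b, H2c, H2d, H2e, H3a, H3b, H3c, H3d, vertex-to-K_4, or vertex splitting, then (G_0,ψ) is (2,2,0)-gain-tight. -/

import Mathlib

/-!
Statement 15 (Lemma 3.8 / lem:moves): applying any of the operations H1a-c, H2a-e,
H3a-d, vertex-to-`K₄` or vertex splitting to a `(2,2,0)`-gain-tight `ℤ₂`-gain graph
results in a `(2,2,0)`-gain-tight gain graph.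
-/

namespace ZGain

/-- A `ℤ₂`-gain graph: a finite multigraph with gains in `ℤˣ = {1, -1}` such that
parallel edges have different gains and loops have gain `-1`. -/
structure GainGraph where
  V : Type
  E : Type
  [fintV : Fintype V]
  [fintE : Fintype E]
  [decV : DecidableEq V]
  [decE : DecidableEq E]
  ends : E → Sym2 V
  gain : E → ℤˣ
  loop_gain : ∀ e : E, (ends e).IsDiag → gain e = -1
  no_parallel : ∀ e e' : E, e ≠ e' → ends e = ends e' → gain e ≠ gain e'

attribute [instance] GainGraph.fintV GainGraph.fintE GainGraph.decV GainGraph.decE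

/-- A cycle: a nonempty closed walk, recorded as a list of (edge, initial vertex)
pairs, with pairwise distinct edges and pairwise distinct vertices.  (A loop is a
cycle of length one; a pair of parallel edges is a cycle of length two.) -/
def IsCycle (G : GainGraph) (c : List (G.E × G.V)) : Prop :=
  ∃ h : c ≠ [],
    List.Chain' (fun st t => G.ends st.1 = s(st.2, t.2)) c ∧
    G.ends (c.getLast h).1 = s((c.getLast h).2, (c.head h).2) ∧
    (c.map Prod.fst).Nodup ∧ (c.map Prod.snd).Nodup

/-- The gain of a cycle: the product of its edge gains. -/
def cycleGain (G : GainGraph) (c : List (G.E × G.V)) : ℤˣ :=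
  (c.map fun st => G.gain st.1).prod

/-- An edge set is balanced if every cycle of edges in it has gain `1`. -/
def BalancedSet (G : GainGraph) (F : Finset G.E) : Prop :=
  ∀ c : List (G.E × G.V), IsCycle G c → (∀ st ∈ c, st.1 ∈ F) → cycleGain G c = 1

/-- The endpoints of an edge, as a finset. -/
def endsFinset (G : GainGraph) (e : G.E) : Finset G.V :=
  Sym2.lift ⟨fun a b => {a, b}, fun a b => Finset.pair_comm a b⟩ (G.ends e)

/-- The set `V(F)` of vertices incident to an edge set `F`. -/
def vertsOf (G : GainGraph) (F : Finset G.E) : Finset G.V :=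
  F.biUnion fun e => endsFinset G e

/-- `(2,2,0)`-gain-sparsity. -/
def Sparse220 (G : GainGraph) : Prop :=
  (∀ F : Finset G.E, F.Nonempty → BalancedSet G F →
      (F.card : ℤ) ≤ 2 * (vertsOf G F).card - 2) ∧
    (∀ F : Finset G.E, (F.card : ℤ) ≤ 2 * (vertsOf G F).card)

/-- `(2,2,0)`-gain-tightness. -/
def Tight220 (G : GainGraph) : Prop :=
  Sparse220 G ∧ Fintype.card G.E = 2 * Fintype.card G.V

/-- `(2,2,2)`-gain-sparsity. -/
def Sparse222 (G : GainGraph) : Prop :=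
  ∀ F : Finset G.E, F.Nonempty → (F.card : ℤ) ≤ 2 * (vertsOf G F).card - 2

/-- `(2,2,2)`-gain-tightness. -/
def Tight222 (G : GainGraph) : Prop :=
  Sparse222 G ∧ (Fintype.card G.E : ℤ) = 2 * Fintype.card G.V - 2

/-! ### Henneberg-type operations -/

/-- `G'` is obtained from `G` by deleting the edges in `del`, adding one new vertex
`v0` and adding the new edges in `new`; `fV` (together with some bijection of the
remaining edges) identifies `G` minus `del` with `G'` minus `v0` and `new`. -/
def GrownWith (G G' : GainGraph) (v0 : G'.V) (del : G.E → Prop) (new : G'.E → Prop)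
    (fV : G.V → G'.V) : Prop :=
  Function.Injective fV ∧ (∀ v, fV v ≠ v0) ∧ (∀ v' : G'.V, v' ≠ v0 → ∃ v, fV v = v') ∧
    ∃ fE : {e : G.E // ¬ del e} → G'.E,
      Function.Injective fE ∧ (∀ e, ¬ new (fE e)) ∧
        (∀ e' : G'.E, ¬ new e' → ∃ e, fE e = e') ∧
        (∀ e, G'.ends (fE e) = Sym2.map fV (G.ends e.1)) ∧
        (∀ e, G'.gain (fE e) = G.gain e.1)

/-- H1a: add a new vertex of degree 2 joined to two distinct vertices. -/
def H1a (G G' : GainGraph) : Prop :=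
  ∃ (v0 : G'.V) (e1 e2 : G'.E) (x y : G'.V) (fV : G.V → G'.V),
    GrownWith G G' v0 (fun _ => False) (fun e => e = e1 ∨ e = e2) fV ∧
    e1 ≠ e2 ∧ x ≠ y ∧ x ≠ v0 ∧ y ≠ v0 ∧
    G'.ends e1 = s(x, v0) ∧ G'.ends e2 = s(y, v0)

/-- H1b: add a new vertex joined to one vertex by two parallel edges with gains
`1` and `-1`. -/
def H1b (G G' : GainGraph) : Prop :=
  ∃ (v0 : G'.V) (e1 e2 : G'.E) (x : G'.V) (fV : G.V → G'.V),
    GrownWith G G' v0 (fun _ => False) (fun e => e = e1 ∨ e = e2) fV ∧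
    e1 ≠ e2 ∧ x ≠ v0 ∧
    G'.ends e1 = s(x, v0) ∧ G'.gain e1 = 1 ∧
    G'.ends e2 = s(x, v0) ∧ G'.gain e2 = -1

/-- H1c: add a new vertex with a loop and one edge to an existing vertex. -/
def H1c (G G' : GainGraph) : Prop :=
  ∃ (v0 : G'.V) (e1 e2 : G'.E) (x : G'.V) (fV : G.V → G'.V),
    GrownWith G G' v0 (fun _ => False) (fun e => e = e1 ∨ e = e2) fV ∧
    e1 ≠ e2 ∧ x ≠ v0 ∧
    G'.ends e1 = s(v0, v0) ∧ G'.gain e1 = -1 ∧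
    G'.ends e2 = s(x, v0)

/-- H2a: delete an edge `(xy,α)` and add a degree-3 vertex with three distinct
neighbours including `x` and `y`, where the gains on the edges to `x` and `y`
multiply to `α`. -/
def H2a (G G' : GainGraph) : Prop :=
  ∃ (d : G.E) (x y z : G.V) (v0 : G'.V) (f1 f2 f3 : G'.E) (fV : G.V → G'.V),
    GrownWith G G' v0 (fun e => e = d) (fun e => e = f1 ∨ e = f2 ∨ e = f3) fV ∧
    x ≠ y ∧ G.ends d = s(x, y) ∧
    f1 ≠ f2 ∧ f1 ≠ f3 ∧ f2 ≠ f3 ∧ z ≠ x ∧ z ≠ y ∧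
    G'.ends f1 = s(fV x, v0) ∧ G'.ends f2 = s(fV y, v0) ∧ G'.ends f3 = s(fV z, v0) ∧
    G'.gain f1 * G'.gain f2 = G.gain d

/-- H2b: delete an edge `(xy,α)` and add a degree-3 vertex with exactly two
neighbours, doubly joined to `x`. -/
def H2b (G G' : GainGraph) : Prop :=
  ∃ (d : G.E) (x y : G.V) (v0 : G'.V) (f1 f2 f3 : G'.E) (fV : G.V → G'.V),
    GrownWith G G' v0 (fun e => e = d) (fun e => e = f1 ∨ e = f2 ∨ e = f3) fV ∧
    x ≠ y ∧ G.ends d = s(x, y) ∧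
    f1 ≠ f2 ∧ f1 ≠ f3 ∧ f2 ≠ f3 ∧
    G'.ends f1 = s(fV x, v0) ∧ G'.gain f1 = 1 ∧
    G'.ends f2 = s(fV x, v0) ∧ G'.gain f2 = -1 ∧
    G'.ends f3 = s(fV y, v0)

/-- H2c: delete a loop `(xx,-1)` and add a degree-3 vertex with exactly two
neighbours, doubly joined to `x`. -/
def H2c (G G' : GainGraph) : Prop :=
  ∃ (d : G.E) (x y : G.V) (v0 : G'.V) (f1 f2 f3 : G'.E) (fV : G.V → G'.V),
    GrownWith G G' v0 (fun e => e = d) (fun e => e = f1 ∨ e = f2 ∨ e = f3) fV ∧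
    G.ends d = s(x, x) ∧ y ≠ x ∧
    f1 ≠ f2 ∧ f1 ≠ f3 ∧ f2 ≠ f3 ∧
    G'.ends f1 = s(fV x, v0) ∧ G'.gain f1 = 1 ∧
    G'.ends f2 = s(fV x, v0) ∧ G'.gain f2 = -1 ∧
    G'.ends f3 = s(fV y, v0)

/-- H2d: delete an edge `(xy,α)` and add a degree-4 vertex joined to `x` and `y`
(with gains multiplying to `α`) and carrying a loop. -/
def H2d (G G' : GainGraph) : Prop :=
  ∃ (d : G.E) (x y : G.V) (v0 : G'.V) (f1 f2 f3 : G'.E) (fV : G.V → G'.V),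
    GrownWith G G' v0 (fun e => e = d) (fun e => e = f1 ∨ e = f2 ∨ e = f3) fV ∧
    x ≠ y ∧ G.ends d = s(x, y) ∧
    f1 ≠ f2 ∧ f1 ≠ f3 ∧ f2 ≠ f3 ∧
    G'.ends f1 = s(fV x, v0) ∧ G'.ends f2 = s(fV y, v0) ∧
    G'.gain f1 * G'.gain f2 = G.gain d ∧
    G'.ends f3 = s(v0, v0) ∧ G'.gain f3 = -1

/-- H2e: delete a loop `(xx,-1)` and add a degree-4 vertex doubly joined to `x`
and carrying a loop. -/
def H2e (G G' : GainGraph) : Prop :=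
  ∃ (d : G.E) (x : G.V) (v0 : G'.V) (f1 f2 f3 : G'.E) (fV : G.V → G'.V),
    GrownWith G G' v0 (fun e => e = d) (fun e => e = f1 ∨ e = f2 ∨ e = f3) fV ∧
    G.ends d = s(x, x) ∧
    f1 ≠ f2 ∧ f1 ≠ f3 ∧ f2 ≠ f3 ∧
    G'.ends f1 = s(fV x, v0) ∧ G'.gain f1 = 1 ∧
    G'.ends f2 = s(fV x, v0) ∧ G'.gain f2 = -1 ∧
    G'.ends f3 = s(v0, v0) ∧ G'.gain f3 = -1

/-- H3a: delete edges `(xy,α)`, `(zw,β)` and add a degree-4 vertex with four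
distinct neighbours `x,y,z,w`. -/
def H3a (G G' : GainGraph) : Prop :=
  ∃ (d1 d2 : G.E) (x y z w : G.V) (v0 : G'.V) (f1 f2 f3 f4 : G'.E) (fV : G.V → G'.V),
    GrownWith G G' v0 (fun e => e = d1 ∨ e = d2)
      (fun e => e = f1 ∨ e = f2 ∨ e = f3 ∨ e = f4) fV ∧
    d1 ≠ d2 ∧ G.ends d1 = s(x, y) ∧ G.ends d2 = s(z, w) ∧
    x ≠ y ∧ x ≠ z ∧ x ≠ w ∧ y ≠ z ∧ y ≠ w ∧ z ≠ w ∧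
    f1 ≠ f2 ∧ f1 ≠ f3 ∧ f1 ≠ f4 ∧ f2 ≠ f3 ∧ f2 ≠ f4 ∧ f3 ≠ f4 ∧
    G'.ends f1 = s(fV x, v0) ∧ G'.ends f2 = s(fV y, v0) ∧
    G'.ends f3 = s(fV z, v0) ∧ G'.ends f4 = s(fV w, v0) ∧
    G'.gain f1 * G'.gain f2 = G.gain d1 ∧ G'.gain f3 * G'.gain f4 = G.gain d2

/-- H3b: delete edges `(xy,α)`, `(yw,β)` and add a degree-4 vertex with three
distinct neighbours, doubly joined to `y`. -/
def H3b (G G' : GainGraph) : Prop :=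
  ∃ (d1 d2 : G.E) (x y w : G.V) (v0 : G'.V) (f1 f2 f3 f4 : G'.E) (fV : G.V → G'.V),
    GrownWith G G' v0 (fun e => e = d1 ∨ e = d2)
      (fun e => e = f1 ∨ e = f2 ∨ e = f3 ∨ e = f4) fV ∧
    d1 ≠ d2 ∧ G.ends d1 = s(x, y) ∧ G.ends d2 = s(y, w) ∧
    x ≠ y ∧ y ≠ w ∧ x ≠ w ∧
    f1 ≠ f2 ∧ f1 ≠ f3 ∧ f1 ≠ f4 ∧ f2 ≠ f3 ∧ f2 ≠ f4 ∧ f3 ≠ f4 ∧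
    G'.ends f1 = s(fV x, v0) ∧ G'.gain f1 = G.gain d1 ∧
    G'.ends f2 = s(fV y, v0) ∧ G'.gain f2 = 1 ∧
    G'.ends f3 = s(fV y, v0) ∧ G'.gain f3 = -1 ∧
    G'.ends f4 = s(fV w, v0) ∧ G'.gain f4 = -G.gain d2

/-- H3c: delete a loop `(xx,-1)` and an edge `(zw,β)` and add a degree-4 vertex
with three distinct neighbours, doubly joined to `x`. -/
def H3c (G G' : GainGraph) : Prop :=
  ∃ (d1 d2 : G.E) (x z w : G.V) (v0 : G'.V) (f1 f2 f3 f4 : G'.E) (fV : G.V → G'.V),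
    GrownWith G G' v0 (fun e => e = d1 ∨ e = d2)
      (fun e => e = f1 ∨ e = f2 ∨ e = f3 ∨ e = f4) fV ∧
    d1 ≠ d2 ∧ G.ends d1 = s(x, x) ∧ G.ends d2 = s(z, w) ∧
    z ≠ w ∧ x ≠ z ∧ x ≠ w ∧
    f1 ≠ f2 ∧ f1 ≠ f3 ∧ f1 ≠ f4 ∧ f2 ≠ f3 ∧ f2 ≠ f4 ∧ f3 ≠ f4 ∧
    G'.ends f1 = s(fV x, v0) ∧ G'.gain f1 = 1 ∧
    G'.ends f2 = s(fV x, v0) ∧ G'.gain f2 = -1 ∧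
    G'.ends f3 = s(fV z, v0) ∧ G'.ends f4 = s(fV w, v0) ∧
    G'.gain f3 * G'.gain f4 = G.gain d2

/-- H3d: delete loops at `x` and `z` and add a degree-4 vertex doubly joined to
each of `x` and `z`. -/
def H3d (G G' : GainGraph) : Prop :=
  ∃ (d1 d2 : G.E) (x z : G.V) (v0 : G'.V) (f1 f2 f3 f4 : G'.E) (fV : G.V → G'.V),
    GrownWith G G' v0 (fun e => e = d1 ∨ e = d2)
      (fun e => e = f1 ∨ e = f2 ∨ e = f3 ∨ e = f4) fV ∧
    d1 ≠ d2 ∧ G.ends d1 = s(x, x) ∧ G.ends d2 = s(z, z) ∧ x ≠ z ∧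
    f1 ≠ f2 ∧ f1 ≠ f3 ∧ f1 ≠ f4 ∧ f2 ≠ f3 ∧ f2 ≠ f4 ∧ f3 ≠ f4 ∧
    G'.ends f1 = s(fV x, v0) ∧ G'.gain f1 = 1 ∧
    G'.ends f2 = s(fV x, v0) ∧ G'.gain f2 = -1 ∧
    G'.ends f3 = s(fV z, v0) ∧ G'.gain f3 = 1 ∧
    G'.ends f4 = s(fV z, v0) ∧ G'.gain f4 = -1

/-- The vertex-to-`K₄` operation. -/
def VertexToK4 (G G' : GainGraph) : Prop :=
  ∃ (v : G.V) (a b c d : G'.V)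
    (fV : {u : G.V // u ≠ v} → G'.V)
    (fE : {e : G.E // v ∉ G.ends e} → G'.E)
    (k : Fin 6 → G'.E)
    (rep : {e : G.E // v ∈ G.ends e} → G'.E),
    (a ≠ b ∧ a ≠ c ∧ a ≠ d ∧ b ≠ c ∧ b ≠ d ∧ c ≠ d) ∧
    Function.Injective fV ∧
    (∀ u, fV u ≠ a ∧ fV u ≠ b ∧ fV u ≠ c ∧ fV u ≠ d) ∧
    (∀ v' : G'.V, v' ≠ a → v' ≠ b → v' ≠ c → v' ≠ d → ∃ u, fV u = v') ∧
    Function.Injective fE ∧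
    (∀ (e : {e : G.E // v ∉ G.ends e}) (u w : G.V) (hu : u ≠ v) (hw : w ≠ v),
      G.ends e.1 = s(u, w) → G'.ends (fE e) = s(fV ⟨u, hu⟩, fV ⟨w, hw⟩)) ∧
    (∀ e, G'.gain (fE e) = G.gain e.1) ∧
    Function.Injective k ∧
    G'.ends (k 0) = s(a, b) ∧ G'.ends (k 1) = s(a, c) ∧ G'.ends (k 2) = s(a, d) ∧
    G'.ends (k 3) = s(b, c) ∧ G'.ends (k 4) = s(b, d) ∧ G'.ends (k 5) = s(c, d) ∧
    (∀ i, G'.gain (k i) = 1) ∧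
    Function.Injective rep ∧
    (∀ (e : {e : G.E // v ∈ G.ends e}),
      (∀ (u : G.V) (hu : u ≠ v), G.ends e.1 = s(u, v) →
        G'.gain (rep e) = G.gain e.1 ∧
          ∃ y : G'.V, (y = a ∨ y = b ∨ y = c ∨ y = d) ∧
            G'.ends (rep e) = s(fV ⟨u, hu⟩, y)) ∧
      ((G.ends e.1).IsDiag →
        G'.gain (rep e) = -1 ∧
          ∃ w z : G'.V, (w = a ∨ w = b ∨ w = c ∨ w = d) ∧
            (z = a ∨ z = b ∨ z = c ∨ z = d) ∧ G'.ends (rep e) = s(w, z))) ∧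
    (∀ e' : G'.E, (∃ e, fE e = e') ∨ (∃ i, k i = e') ∨ (∃ e, rep e = e')) ∧
    (∀ e i, fE e ≠ k i) ∧ (∀ e e2, fE e ≠ rep e2) ∧ (∀ i e2, k i ≠ rep e2)

/-- The vertex splitting operation. -/
def VertexSplit (G G' : GainGraph) : Prop :=
  ∃ (v1 v2 : G.V) (e12 : G.E) (N1 : Set G.V) (D : Set G.E) (movedLoop : Bool)
    (v0 : G'.V) (g1 g2 : G'.E) (fV : G.V → G'.V)
    (fE : {e : G.E // e ∉ D} → G'.E) (mv : {e : G.E // e ∈ D} → G'.E),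
    v1 ≠ v2 ∧ G.ends e12 = s(v1, v2) ∧
    v1 ∉ N1 ∧ v2 ∉ N1 ∧ (∀ u ∈ N1, ∃ e : G.E, G.ends e = s(v1, u)) ∧
    (∀ e : G.E, e ∈ D ↔
      ((∃ u ∈ N1, G.ends e = s(v1, u)) ∨ (movedLoop = true ∧ G.ends e = s(v1, v1)))) ∧
    Function.Injective fV ∧ (∀ u, fV u ≠ v0) ∧ (∀ v' : G'.V, v' ≠ v0 → ∃ u, fV u = v') ∧
    Function.Injective fE ∧
    (∀ e, G'.ends (fE e) = Sym2.map fV (G.ends e.1)) ∧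
    (∀ e, G'.gain (fE e) = G.gain e.1) ∧
    Function.Injective mv ∧
    (∀ e : {e : G.E // e ∈ D},
      (G.ends e.1 = s(v1, v1) → G'.ends (mv e) = s(v0, v0) ∧ G'.gain (mv e) = -1) ∧
      (∀ u ∈ N1, G.ends e.1 = s(v1, u) →
        G'.ends (mv e) = s(v0, fV u) ∧ G'.gain (mv e) = G.gain e.1)) ∧
    g1 ≠ g2 ∧
    G'.ends g1 = s(v0, fV v1) ∧ G'.gain g1 = 1 ∧
    G'.ends g2 = s(v0, fV v2) ∧ G'.gain g2 = G.gain e12 ∧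
    (∀ e' : G'.E, e' = g1 ∨ e' = g2 ∨ (∃ e, fE e = e') ∨ (∃ e, mv e = e')) ∧
    (∀ e, fE e ≠ g1 ∧ fE e ≠ g2) ∧ (∀ e, mv e ≠ g1 ∧ mv e ≠ g2) ∧
    (∀ e e2, fE e ≠ mv e2)

/-- Any one of the fourteen construction moves. -/
def IsMove (G G' : GainGraph) : Prop :=
  H1a G G' ∨ H1b G G' ∨ H1c G G' ∨
    H2a G G' ∨ H2b G G' ∨ H2c G G' ∨ H2d G G' ∨ H2e G G' ∨
    H3a G G' ∨ H3b G G' ∨ H3c G G' ∨ H3d G G' ∨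
    VertexToK4 G G' ∨ VertexSplit G G'

/-! ### Base graphs -/

/-- `(2,2,0)`-gain-tightness of the sub-gain-graph on `(SV, SE)`. -/
def Tight220On (G : GainGraph) (SV : Set G.V) (SE : Set G.E) : Prop :=
  (∀ F : Finset G.E, (↑F : Set G.E) ⊆ SE → F.Nonempty → BalancedSet G F →
      (F.card : ℤ) ≤ 2 * (vertsOf G F).card - 2) ∧
    (∀ F : Finset G.E, (↑F : Set G.E) ⊆ SE → (F.card : ℤ) ≤ 2 * (vertsOf G F).card) ∧
    Nat.card SE = 2 * Nat.card SV

/-- The base graph `2K₂¹` (on the part `(SV, SE)` of `G`). -/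
def Is2K21On (G : GainGraph) (SV : Set G.V) (SE : Set G.E) : Prop :=
  ∃ (a b : G.V) (e1 e2 e3 e4 : G.E),
    a ∈ SV ∧ b ∈ SV ∧ a ≠ b ∧ (∀ v ∈ SV, v = a ∨ v = b) ∧
    e1 ∈ SE ∧ e2 ∈ SE ∧ e3 ∈ SE ∧ e4 ∈ SE ∧
    e1 ≠ e2 ∧ e1 ≠ e3 ∧ e1 ≠ e4 ∧ e2 ≠ e3 ∧ e2 ≠ e4 ∧ e3 ≠ e4 ∧
    (∀ e ∈ SE, e = e1 ∨ e = e2 ∨ e = e3 ∨ e = e4) ∧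
    G.ends e1 = s(a, b) ∧ G.gain e1 = 1 ∧
    G.ends e2 = s(a, b) ∧ G.gain e2 = -1 ∧
    G.ends e3 = s(a, a) ∧ G.ends e4 = s(b, b)

/-- The base graph `K₃¹` with a balanced triangle. -/
def IsK31On (G : GainGraph) (SV : Set G.V) (SE : Set G.E) : Prop :=
  ∃ (a b c : G.V) (e1 e2 e3 e4 e5 e6 : G.E),
    a ∈ SV ∧ b ∈ SV ∧ c ∈ SV ∧ a ≠ b ∧ a ≠ c ∧ b ≠ c ∧
    (∀ v ∈ SV, v = a ∨ v = b ∨ v = c) ∧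
    e1 ∈ SE ∧ e2 ∈ SE ∧ e3 ∈ SE ∧ e4 ∈ SE ∧ e5 ∈ SE ∧ e6 ∈ SE ∧
    e1 ≠ e2 ∧ e1 ≠ e3 ∧ e1 ≠ e4 ∧ e1 ≠ e5 ∧ e1 ≠ e6 ∧
    e2 ≠ e3 ∧ e2 ≠ e4 ∧ e2 ≠ e5 ∧ e2 ≠ e6 ∧
    e3 ≠ e4 ∧ e3 ≠ e5 ∧ e3 ≠ e6 ∧ e4 ≠ e5 ∧ e4 ≠ e6 ∧ e5 ≠ e6 ∧
    (∀ e ∈ SE, e = e1 ∨ e = e2 ∨ e = e3 ∨ e = e4 ∨ e = e5 ∨ e = e6) ∧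
    G.ends e1 = s(a, b) ∧ G.gain e1 = 1 ∧
    G.ends e2 = s(b, c) ∧ G.gain e2 = 1 ∧
    G.ends e3 = s(a, c) ∧ G.gain e3 = 1 ∧
    G.ends e4 = s(a, a) ∧ G.ends e5 = s(b, b) ∧ G.ends e6 = s(c, c)

/-- The base graph `R`. -/
def IsROn (G : GainGraph) (SV : Set G.V) (SE : Set G.E) : Prop :=
  ∃ (v w z : G.V) (e1 e2 e3 e4 e5 e6 : G.E),
    v ∈ SV ∧ w ∈ SV ∧ z ∈ SV ∧ v ≠ w ∧ v ≠ z ∧ w ≠ z ∧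
    (∀ u ∈ SV, u = v ∨ u = w ∨ u = z) ∧
    e1 ∈ SE ∧ e2 ∈ SE ∧ e3 ∈ SE ∧ e4 ∈ SE ∧ e5 ∈ SE ∧ e6 ∈ SE ∧
    e1 ≠ e2 ∧ e1 ≠ e3 ∧ e1 ≠ e4 ∧ e1 ≠ e5 ∧ e1 ≠ e6 ∧
    e2 ≠ e3 ∧ e2 ≠ e4 ∧ e2 ≠ e5 ∧ e2 ≠ e6 ∧
    e3 ≠ e4 ∧ e3 ≠ e5 ∧ e3 ≠ e6 ∧ e4 ≠ e5 ∧ e4 ≠ e6 ∧ e5 ≠ e6 ∧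
    (∀ e ∈ SE, e = e1 ∨ e = e2 ∨ e = e3 ∨ e = e4 ∨ e = e5 ∨ e = e6) ∧
    G.ends e1 = s(v, v) ∧
    G.ends e2 = s(v, w) ∧ G.gain e2 = 1 ∧
    G.ends e3 = s(v, w) ∧ G.gain e3 = -1 ∧
    G.ends e4 = s(v, z) ∧ G.gain e4 = 1 ∧
    G.ends e5 = s(v, z) ∧ G.gain e5 = -1 ∧
    G.ends e6 = s(w, z) ∧ G.gain e6 = 1

/-- A base graph `K₄⁺⁺`: a balanced `K₄` (all gains `1`) plus two extra gain `-1`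
edges (or loops), subject to `(2,2,0)`-gain-tightness. -/
def IsK4ppOn (G : GainGraph) (SV : Set G.V) (SE : Set G.E) : Prop :=
  ∃ (a b c d : G.V) (k1 k2 k3 k4 k5 k6 f1 f2 : G.E),
    a ∈ SV ∧ b ∈ SV ∧ c ∈ SV ∧ d ∈ SV ∧
    a ≠ b ∧ a ≠ c ∧ a ≠ d ∧ b ≠ c ∧ b ≠ d ∧ c ≠ d ∧
    (∀ v ∈ SV, v = a ∨ v = b ∨ v = c ∨ v = d) ∧
    k1 ∈ SE ∧ k2 ∈ SE ∧ k3 ∈ SE ∧ k4 ∈ SE ∧ k5 ∈ SE ∧ k6 ∈ SE ∧ f1 ∈ SE ∧ f2 ∈ SE ∧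
    List.Nodup [k1, k2, k3, k4, k5, k6, f1, f2] ∧
    (∀ e ∈ SE, e = k1 ∨ e = k2 ∨ e = k3 ∨ e = k4 ∨ e = k5 ∨ e = k6 ∨ e = f1 ∨ e = f2) ∧
    G.ends k1 = s(a, b) ∧ G.ends k2 = s(a, c) ∧ G.ends k3 = s(a, d) ∧
    G.ends k4 = s(b, c) ∧ G.ends k5 = s(b, d) ∧ G.ends k6 = s(c, d) ∧
    G.gain k1 = 1 ∧ G.gain k2 = 1 ∧ G.gain k3 = 1 ∧
    G.gain k4 = 1 ∧ G.gain k5 = 1 ∧ G.gain k6 = 1 ∧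
    G.gain f1 = -1 ∧ G.gain f2 = -1 ∧
    Tight220On G SV SE

/-- Membership in the family `ℬ` of base graphs (on the part `(SV, SE)`). -/
def IsBaseOn (G : GainGraph) (SV : Set G.V) (SE : Set G.E) : Prop :=
  Is2K21On G SV SE ∨ IsK31On G SV SE ∨ IsROn G SV SE ∨ IsK4ppOn G SV SE

/-- `G` is a disjoint union of (copies of) base graphs. -/
def IsDisjointUnionOfBases (G : GainGraph) : Prop :=
  ∃ (cV : G.V → ℕ) (cE : G.E → ℕ),
    (∀ e : G.E, ∀ v ∈ G.ends e, cE e = cV v) ∧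
    ∀ i : ℕ, ((∃ v, cV v = i) ∨ (∃ e, cE e = i)) →
      IsBaseOn G {v | cV v = i} {e | cE e = i}

/-- The gain graphs constructible from vertex-disjoint copies of base graphs by
H1, H2, H3, vertex-to-`K₄` and vertex splitting moves. -/
inductive Constructible : GainGraph → Prop
  | base (G : GainGraph) : IsDisjointUnionOfBases G → Constructible G
  | step (G G' : GainGraph) : Constructible G → IsMove G G' → Constructible G'




/-- `σ` is a potential on `F`: switching at the vertices with `σ = -1` makes all gains on `F`
equal to `1`. -/
def IsPotential (G : GainGraph) (F : Finset G.E) (σ : G.V → ℤˣ) : Prop :=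
  ∀ e ∈ F, ∀ a b, G.ends e = s(a, b) → G.gain e = σ a * σ b

lemma mem_vertsOf {G : GainGraph} {F : Finset G.E} {v : G.V} :
    v ∈ vertsOf G F ↔ ∃ e ∈ F, v ∈ G.ends e := by
  have key : ∀ e, v ∈ endsFinset G e ↔ v ∈ G.ends e := by
    intro e
    unfold endsFinset
    induction G.ends e using Sym2.ind with
    | h a b => simp
  simp [vertsOf, key]

lemma prod_gain_of_chain {G : GainGraph} {F : Finset G.E} {σ : G.V → ℤˣ}
    (hσ : IsPotential G F σ) (c : List (G.E × G.V)) (h : c ≠ [])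
    (hc : List.IsChain (fun st t => G.ends st.1 = s(st.2, t.2)) c) (hF : ∀ st ∈ c, st.1 ∈ F) :
    (c.map fun st => G.gain st.1).prod =
      σ (c.head h).2 * σ (c.getLast h).2 * G.gain (c.getLast h).1 := by
  induction c with
  | nil => exact absurd rfl h
  | cons x l ih =>
    cases l with
    | nil => simp [Int.units_mul_self]
    | cons y l =>
      rw [List.isChain_cons_cons] at hc
      have := ih (by simp) hc.2 (fun st hst => hF st (List.mem_cons_of_mem _ hst))
      rw [List.map_cons, List.prod_cons, this, hσ x.1 (hF x (by simp)) _ _ hc.1]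
      simp only [List.head_cons, List.getLast_cons_cons]
      calc _ = σ x.2 * (σ y.2 * σ y.2) * σ ((y :: l).getLast (by simp)).2 *
            G.gain ((y :: l).getLast (by simp)).1 := by simp only [mul_assoc]
        _ = _ := by rw [Int.units_mul_self, mul_one]

lemma IsPotential.balancedSet {G : GainGraph} {F : Finset G.E} {σ : G.V → ℤˣ}
    (hσ : IsPotential G F σ) : BalancedSet G F := by
  rintro c ⟨h, hc, hlast, -, -⟩ hF
  rw [cycleGain, prod_gain_of_chain hσ c h hc hF,
    hσ _ (hF _ (List.getLast_mem h)) _ _ hlast]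
  generalize σ (c.head h).2 = p
  generalize σ (c.getLast h).2 = q
  calc p * q * (q * p) = p * (q * q) * p := by simp only [mul_assoc]
    _ = 1 := by rw [Int.units_mul_self, mul_one, Int.units_mul_self]

/-- The simple graph underlying an edge set. -/
def edgeGraph (G : GainGraph) (F : Finset G.E) : SimpleGraph G.V where
  Adj u w := u ≠ w ∧ ∃ e ∈ F, G.ends e = s(u, w)
  symm := ⟨fun u w ⟨h, e, he, h'⟩ => ⟨h.symm, e, he, by rw [h', Sym2.eq_swap]⟩⟩
  loopless := ⟨fun u h => h.1 rfl⟩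

/-- A path of `edgeGraph G F` followed by an edge outside `F`, as a list of steps. -/
lemma exists_steps_of_isPath {G : GainGraph} {F : Finset G.E} {u b : G.V} (e₀ : G.E)
    (he₀ : e₀ ∉ F) (p : (edgeGraph G F).Walk u b) (hp : p.IsPath) :
    ∃ c : List (G.E × G.V), ∃ h : c ≠ [],
      List.IsChain (fun st t => G.ends st.1 = s(st.2, t.2)) c ∧ (c.head h).2 = u ∧
      c.getLast h = (e₀, b) ∧ (c.map Prod.fst).Nodup ∧ (c.map Prod.snd).Nodup ∧
      (∀ st ∈ c, st.2 ∈ p.support) ∧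
      (∀ st ∈ c, st.1 = e₀ ∨ st.1 ∈ F ∧ ∀ v ∈ G.ends st.1, v ∈ p.support) := by
  induction p with
  | @nil u => exact ⟨[(e₀, u)], by simp⟩
  | @cons u w b hadj p ih =>
    rw [SimpleGraph.Walk.cons_isPath_iff] at hp
    obtain ⟨c, h, hc, hhead, hlast, hn1, hn2, hs, hE⟩ := ih hp.1
    obtain ⟨e, he, hends⟩ := hadj.2
    refine ⟨(e, u) :: c, by simp, ?_, by simp, by rw [List.getLast_cons h, hlast], ?_, ?_, ?_, ?_⟩
    · cases c with
      | nil => exact absurd rfl h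
      | cons y l =>
        rw [List.isChain_cons_cons]
        simp only [List.head_cons] at hhead
        exact ⟨by rw [hhead]; exact hends, hc⟩
    · rw [List.map_cons, List.nodup_cons]
      refine ⟨fun hmem => ?_, hn1⟩
      obtain ⟨st, hst, hste⟩ := List.mem_map.1 hmem
      simp only at hste
      rcases hE st hst with h0 | ⟨-, h0⟩
      · exact he₀ (by rw [← h0, hste]; exact he)
      · exact hp.2 (h0 u (by rw [hste, hends]; simp))
    · rw [List.map_cons, List.nodup_cons]
      refine ⟨fun hmem => ?_, hn2⟩
      obtain ⟨st, hst, hste⟩ := List.mem_map.1 hmem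
      simp only at hste
      exact hp.2 (hste ▸ hs st hst)
    · intro st hst
      rw [SimpleGraph.Walk.support_cons]
      rcases List.mem_cons.1 hst with rfl | hst
      · simp
      · exact List.mem_cons_of_mem _ (hs st hst)
    · intro st hst
      rw [SimpleGraph.Walk.support_cons]
      rcases List.mem_cons.1 hst with rfl | hst
      · refine Or.inr ⟨he, fun v hv => ?_⟩
        simp only [hends, Sym2.mem_iff] at hv
        rcases hv with rfl | rfl <;> simp
      · rcases hE st hst with h0 | ⟨h0, h1⟩
        · exact Or.inl h0
        · exact Or.inr ⟨h0, fun v hv => List.mem_cons_of_mem _ (h1 v hv)⟩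

lemma BalancedSet.mono {G : GainGraph} {F F' : Finset G.E} (h : BalancedSet G F)
    (hF : F' ⊆ F) : BalancedSet G F' :=
  fun c hc hc' => h c hc fun st hst => hF (hc' st hst)

lemma BalancedSet.exists_isPotential {G : GainGraph} {F : Finset G.E} (h : BalancedSet G F) :
    ∃ σ, IsPotential G F σ := by
  classical
  induction F using Finset.induction_on with
  | empty => exact ⟨fun _ => 1, by simp [IsPotential]⟩
  | insert e F he ih =>
    obtain ⟨σ, hσ⟩ := ih (h.mono (Finset.subset_insert e F))
    obtain ⟨a, b, hab⟩ : ∃ a b, G.ends e = s(a, b) := by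
      induction hx : G.ends e using Sym2.ind with
      | h a b => exact ⟨a, b, rfl⟩
    have extend : ∀ τ, IsPotential G F τ → G.gain e = τ a * τ b →
        IsPotential G (insert e F) τ := by
      intro τ hτ hg f hf x y hxy
      rcases Finset.mem_insert.1 hf with rfl | hf
      · rw [hab, Sym2.eq_iff] at hxy
        rcases hxy with ⟨rfl, rfl⟩ | ⟨rfl, rfl⟩
        · exact hg
        · rw [hg, mul_comm]
      · exact hτ f hf x y hxy
    by_cases hr : (edgeGraph G F).Reachable a b
    · obtain ⟨p, hp⟩ := hr.exists_isPath
      obtain ⟨c, hne, hc, hhead, hlast, hn1, hn2, -, hE⟩ := exists_steps_of_isPath e he p hp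
      have hcyc : IsCycle G c := ⟨hne, hc, by rw [hlast, hhead, hab, Sym2.eq_swap], hn1, hn2⟩
      refine ⟨σ, extend σ hσ ?_⟩
      have hmem : ∀ st ∈ c, st.1 ∈ insert e F := by
        intro st hst
        rcases hE st hst with h0 | h0
        · simp [h0]
        · simp [h0.1]
      have h1 := h c hcyc hmem
      obtain ⟨l, rfl⟩ : ∃ l, c = l ++ [(e, b)] :=
        ⟨c.dropLast, by rw [← hlast, List.dropLast_append_getLast hne]⟩
      rw [cycleGain, List.map_append, List.prod_append] at h1
      have hl : ∀ st ∈ l, st.1 ∈ F := by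
        intro st hst
        rcases hE st (by simp [hst]) with h0 | h0
        · rw [List.map_append, List.nodup_append] at hn1
          exact absurd h0 (hn1.2.2 _ (List.mem_map_of_mem hst) _ (by simp))
        · exact h0.1
      by_cases hl0 : l = []
      · subst hl0
        simp only [List.nil_append, List.head_cons] at hhead
        subst hhead
        simpa [Int.units_mul_self] using h1
      · rw [prod_gain_of_chain hσ l hl0 (List.isChain_append.1 hc).1 hl,
          hσ _ (hl _ (List.getLast_mem hl0)) (l.getLast hl0).2 b
            ((List.isChain_append.1 hc).2.2 _ (by simp [List.getLast?_eq_getLast_of_ne_nil hl0])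
              (e, b) (by simp))] at h1
        rw [List.head_append_of_ne_nil hl0] at hhead
        rw [hhead] at h1
        generalize σ (l.getLast hl0).2 = q at h1
        have h2 : σ a * q * (q * σ b) = σ a * σ b := by
          calc σ a * q * (q * σ b) = σ a * (q * q) * σ b := by simp only [mul_assoc]
            _ = _ := by rw [Int.units_mul_self, mul_one]
        rw [h2] at h1
        simp only [List.map_cons, List.map_nil, List.prod_singleton] at h1
        rw [← mul_right_inj (σ a * σ b), h1, Int.units_mul_self]
    · by_cases hg : G.gain e = σ a * σ b
      · exact ⟨σ, extend σ hσ hg⟩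
      · refine ⟨fun v => if (edgeGraph G F).Reachable a v then -σ v else σ v, extend _ ?_ ?_⟩
        · intro f hf x y hxy
          have hreach : (edgeGraph G F).Reachable a x ↔ (edgeGraph G F).Reachable a y := by
            by_cases hne : x = y
            · rw [hne]
            · have : (edgeGraph G F).Adj x y := ⟨hne, f, hf, hxy⟩
              exact ⟨fun h => h.trans this.reachable, fun h => h.trans this.symm.reachable⟩
          simp only [hreach]
          split_ifs <;> simp [hσ f hf x y hxy]
        · simp only [SimpleGraph.Reachable.refl, if_true, hr, if_false, neg_mul]
          exact Int.units_ne_iff_eq_neg.1 hg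

lemma Sparse220.card_le {G : GainGraph} (hG : Sparse220 G) {P : Finset G.E} {T : Finset G.V}
    (hPT : ∀ e ∈ P, ∀ v ∈ G.ends e, v ∈ T) : (P.card : ℤ) ≤ 2 * T.card := by
  have h1 : vertsOf G P ⊆ T := fun v hv => by
    obtain ⟨e, he, hv⟩ := mem_vertsOf.1 hv
    exact hPT e he v hv
  have := hG.2 P
  have := Finset.card_le_card h1
  omega

lemma Sparse220.card_le_of_isPotential {G : GainGraph} (hG : Sparse220 G) {P : Finset G.E}
    {T : Finset G.V} (hPT : ∀ e ∈ P, ∀ v ∈ G.ends e, v ∈ T) (hT : T.Nonempty) {σ : G.V → ℤˣ}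
    (hσ : IsPotential G P σ) : (P.card : ℤ) ≤ 2 * T.card - 2 := by
  have h1 : vertsOf G P ⊆ T := fun v hv => by
    obtain ⟨e, he, hv⟩ := mem_vertsOf.1 hv
    exact hPT e he v hv
  have h2 := Finset.card_le_card h1
  have h3 := hT.card_pos
  rcases P.eq_empty_or_nonempty with rfl | hP
  · simp only [Finset.card_empty]; omega
  · have := hG.1 P hP hσ.balancedSet
    omega

/-- Sparsity transfers along a reduction of edge sets of `G'` to edge sets of `G` that does not
increase the freedom count. -/
lemma Sparse220.of_reduction {G G' : GainGraph} (hG : Sparse220 G)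
    (hcount : ∀ F : Finset G'.E, ∃ (P : Finset G.E) (T : Finset G.V),
      (∀ e ∈ P, ∀ v ∈ G.ends e, v ∈ T) ∧
      F.card + 2 * T.card ≤ P.card + 2 * (vertsOf G' F).card)
    (hbal : ∀ (F : Finset G'.E) (σ : G'.V → ℤˣ), F.Nonempty → IsPotential G' F σ →
      ∃ (P : Finset G.E) (T : Finset G.V), (∀ e ∈ P, ∀ v ∈ G.ends e, v ∈ T) ∧
      ((T.Nonempty ∧ (∃ τ, IsPotential G P τ) ∧
          F.card + 2 * T.card ≤ P.card + 2 * (vertsOf G' F).card) ∨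
        F.card + 2 * T.card + 2 ≤ P.card + 2 * (vertsOf G' F).card)) :
    Sparse220 G' := by
  refine ⟨fun F hF hFb => ?_, fun F => ?_⟩
  · obtain ⟨σ, hσ⟩ := hFb.exists_isPotential
    obtain ⟨P, T, hPT, ⟨hT, ⟨τ, hτ⟩, h⟩ | h⟩ := hbal F σ hF hσ
    · have := hG.card_le_of_isPotential hPT hT hτ
      omega
    · have := hG.card_le hPT
      omega
  · obtain ⟨P, T, hPT, h⟩ := hcount F
    have := hG.card_le hPT
    omega

lemma exists_ends_eq {G : GainGraph} {e : G.E} {v : G.V} (h : v ∈ G.ends e) :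
    ∃ u, G.ends e = s(u, v) := by
  obtain ⟨u, hu⟩ := Sym2.mem_iff_exists.1 h
  exact ⟨u, by rw [hu, Sym2.eq_swap]⟩

lemma IsPotential.union {G : GainGraph} {F F' : Finset G.E} {σ : G.V → ℤˣ}
    (h : IsPotential G F σ) (h' : IsPotential G F' σ) : IsPotential G (F ∪ F') σ :=
  fun e he => (Finset.mem_union.1 he).elim (h e) (h' e)

/-- An edge set admitting a potential contains no loop. -/
lemma IsPotential.ends_ne {G : GainGraph} {F : Finset G.E} {σ : G.V → ℤˣ}
    (h : IsPotential G F σ) {e : G.E} (he : e ∈ F) {a b : G.V} (hab : G.ends e = s(a, b)) :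
    a ≠ b := by
  rintro rfl
  have h1 := h e he a a hab
  rw [G.loop_gain e (by rw [hab]; simp), Int.units_mul_self] at h1
  exact absurd h1 (by decide)

lemma card_eq_card_add_of_injective {α β : Type*} [Fintype α] [Fintype β] {f : α → β}
    (hf : Function.Injective f) (C : Finset β) (hC : ∀ a, f a ∉ C)
    (hsurj : ∀ b, b ∉ C → ∃ a, f a = b) : Fintype.card β = Fintype.card α + C.card := by
  classical
  have h1 : Finset.univ.image f = Cᶜ := by
    ext b
    simp only [Finset.mem_image, Finset.mem_univ, true_and, Finset.mem_compl]
    exact ⟨by rintro ⟨a, rfl⟩; exact hC a, hsurj b⟩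
  have h2 := Finset.card_image_of_injective Finset.univ hf
  rw [h1, Finset.card_univ] at h2
  have h3 := Finset.card_add_card_compl C
  omega

lemma card_le_card_filter_add_card_inter {α β : Type*} [Fintype α] [DecidableEq β] {φ : α → β}
    (C : Finset β) (hsurj : ∀ b, b ∉ C → ∃ a, φ a = b) (F : Finset β) :
    F.card ≤ (Finset.univ.filter fun a => φ a ∈ F).card + (F ∩ C).card := by
  have h1 : F \ C ⊆ (Finset.univ.filter fun x => φ x ∈ F).image φ := by
    intro b hb
    rw [Finset.mem_sdiff] at hb
    obtain ⟨x, rfl⟩ := hsurj b hb.2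
    exact Finset.mem_image_of_mem _ (by simp [hb.1])
  have h2 := (Finset.card_le_card h1).trans Finset.card_image_le
  have h3 := Finset.card_sdiff_add_card_inter F C
  omega

/-- A one-vertex extension with deleted edges `D` and new edges `N` preserves tightness as soon
as every edge set `F` recovers enough deleted edges from its new edges, and recovers them
compatibly with every potential on `F`. -/
lemma Tight220.of_grownWith {G G' : GainGraph} (hG : Tight220 G) {v0 : G'.V} {del : G.E → Prop}
    {new : G'.E → Prop} {fV : G.V → G'.V} (h : GrownWith G G' v0 del new fV)
    (D : Finset G.E) (hD : ∀ e, del e ↔ e ∈ D) (N : Finset G'.E) (hN : ∀ e, new e ↔ e ∈ N)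
    (hcard : N.card = D.card + 2) (hv0 : ∀ e ∈ N, v0 ∈ G'.ends e)
    (hcount : ∀ F : Finset G'.E, ∃ Q ⊆ D, (F ∩ N).card ≤ Q.card + 2 ∧
      ∀ e ∈ Q, ∀ v ∈ G.ends e, fV v ∈ vertsOf G' F)
    (hbal : ∀ (F : Finset G'.E) (σ : G'.V → ℤˣ), IsPotential G' F σ →
      ∃ Q ⊆ D, (F ∩ N).card ≤ Q.card + 2 ∧ (∀ e ∈ Q, ∀ v ∈ G.ends e, fV v ∈ vertsOf G' F) ∧
        IsPotential G Q (σ ∘ fV)) :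
    Tight220 G' := by
  classical
  obtain ⟨hfV, hfv0, hsurjV, fE, hfE, hfEN, hsurjE, hends, hgain⟩ := h
  simp only [hN] at hfEN hsurjE
  let old : Finset G'.E → Finset G.E := fun F =>
    (Finset.univ.filter fun x => fE x ∈ F).map (Function.Embedding.subtype _)
  have mem_old : ∀ {F e}, e ∈ old F → ∃ x, x.1 = e ∧ fE x ∈ F := by
    intro F e he
    obtain ⟨x, hx, rfl⟩ := Finset.mem_map.1 he
    exact ⟨x, rfl, (Finset.mem_filter.1 hx).2⟩
  have card_old : ∀ F : Finset G'.E, F.card ≤ (old F).card + (F ∩ N).card := by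
    intro F
    simpa only [old, Finset.card_map] using card_le_card_filter_add_card_inter N hsurjE F
  have card_union : ∀ {F : Finset G'.E} {Q}, Q ⊆ D → (old F ∪ Q).card = (old F).card + Q.card := by
    intro F Q hQ
    refine Finset.card_union_of_disjoint (Finset.disjoint_left.2 fun e he he' => ?_)
    obtain ⟨x, rfl, -⟩ := mem_old he
    exact x.2 ((hD _).2 (hQ he'))
  let T : Finset G'.E → Finset G.V := fun F => Finset.univ.filter fun v => fV v ∈ vertsOf G' F
  have ends_old : ∀ F, ∀ e ∈ old F, ∀ v ∈ G.ends e, v ∈ T F := by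
    intro F e he v hv
    obtain ⟨x, rfl, hx⟩ := mem_old he
    simp only [T, Finset.mem_filter, Finset.mem_univ, true_and]
    exact mem_vertsOf.2 ⟨_, hx, by rw [hends]; exact Sym2.mem_map.2 ⟨v, hv, rfl⟩⟩
  have card_T : ∀ F, (T F).card ≤ ((vertsOf G' F).erase v0).card := by
    intro F
    rw [← Finset.card_image_of_injective _ hfV]
    refine Finset.card_le_card fun v' hv' => ?_
    obtain ⟨v, hv, rfl⟩ := Finset.mem_image.1 hv'
    exact Finset.mem_erase.2 ⟨hfv0 v, (Finset.mem_filter.1 hv).2⟩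
  have pot_old : ∀ {F σ}, IsPotential G' F σ → IsPotential G (old F) (σ ∘ fV) := by
    intro F σ hσ e he a b hab
    obtain ⟨x, rfl, hx⟩ := mem_old he
    rw [← hgain]
    exact hσ _ hx _ _ (by rw [hends, hab]; rfl)
  have ends_union : ∀ {F : Finset G'.E} {Q},
      (∀ e ∈ Q, ∀ v ∈ G.ends e, fV v ∈ vertsOf G' F) →
      ∀ e ∈ old F ∪ Q, ∀ v ∈ G.ends e, v ∈ T F := by
    intro F Q hQ e he v hv
    rcases Finset.mem_union.1 he with he | he
    · exact ends_old F e he v hv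
    · simpa [T] using hQ e he v hv
  have v0_mem : ∀ {F}, (F ∩ N).Nonempty → v0 ∈ vertsOf G' F := by
    rintro F ⟨e, he⟩
    rw [Finset.mem_inter] at he
    exact mem_vertsOf.2 ⟨e, he.1, hv0 e he.2⟩
  constructor
  · refine hG.1.of_reduction (fun F => ?_) fun F σ hF hσ => ?_
    · rcases (F ∩ N).eq_empty_or_nonempty with hFN | hFN
      · refine ⟨old F, T F, ends_old F, ?_⟩
        have h1 := card_old F
        have h2 := (card_T F).trans (Finset.card_le_card (Finset.erase_subset _ _))
        rw [hFN, Finset.card_empty] at h1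
        omega
      · obtain ⟨Q, hQD, hQ, hQe⟩ := hcount F
        refine ⟨old F ∪ Q, T F, ends_union hQe, ?_⟩
        have h1 := card_old F
        have h2 := card_T F
        have h3 := Finset.card_erase_add_one (v0_mem hFN)
        rw [card_union hQD]
        omega
    · have hT : (T F).Nonempty := by
        obtain ⟨e, he⟩ := hF
        by_cases heN : e ∈ N
        · obtain ⟨u, hu⟩ := exists_ends_eq (hv0 e heN)
          obtain ⟨w, rfl⟩ := hsurjV u (hσ.ends_ne he hu)
          exact ⟨w, by simpa [T] using mem_vertsOf.2 ⟨e, he, by rw [hu]; simp⟩⟩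
        · obtain ⟨x, rfl⟩ := hsurjE e heN
          induction hx : G.ends x.1 using Sym2.ind with
          | h a b =>
            exact ⟨a, by simpa [T] using mem_vertsOf.2 ⟨_, he, by rw [hends, hx]; simp⟩⟩
      rcases (F ∩ N).eq_empty_or_nonempty with hFN | hFN
      · refine ⟨old F, T F, ends_old F, Or.inl ⟨hT, ⟨_, pot_old hσ⟩, ?_⟩⟩
        have h1 := card_old F
        have h2 := (card_T F).trans (Finset.card_le_card (Finset.erase_subset _ _))
        rw [hFN, Finset.card_empty] at h1
        omega
      · obtain ⟨Q, hQD, hQ, hQe, hQσ⟩ := hbal F σ hσ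
        refine ⟨old F ∪ Q, T F, ends_union hQe,
          Or.inl ⟨hT, ⟨_, (pot_old hσ).union hQσ⟩, ?_⟩⟩
        have h1 := card_old F
        have h2 := card_T F
        have h3 := Finset.card_erase_add_one (v0_mem hFN)
        rw [card_union hQD]
        omega
  · have hV := card_eq_card_add_of_injective hfV {v0} (by simpa using hfv0) (by simpa using hsurjV)
    have hE := card_eq_card_add_of_injective hfE N hfEN hsurjE
    rw [Finset.card_singleton] at hV
    have hE' : Fintype.card {e // ¬ del e} + D.card = Fintype.card G.E := by
      have h1 : (Finset.univ.filter fun e => ¬ del e) = Dᶜ := by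
        ext e
        simp [hD]
      rw [Fintype.card_subtype, h1, add_comm, Finset.card_add_card_compl]
    have := hG.2
    omega

lemma mem_vertsOf_of_ends {G : GainGraph} {F : Finset G.E} {e : G.E} (he : e ∈ F) {a b : G.V}
    (hab : G.ends e = s(a, b)) : a ∈ vertsOf G F :=
  mem_vertsOf.2 ⟨e, he, by rw [hab]; simp⟩

/-- Two edges from the new vertex recover the endpoints of a deleted edge. -/
lemma ends_mem_vertsOf_of_pair {G G' : GainGraph} {F : Finset G'.E} {fV : G.V → G'.V} {v0 : G'.V}
    {d : G.E} {x y : G.V} {f g : G'.E} (hd : G.ends d = s(x, y)) (hf : f ∈ F) (hg : g ∈ F)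
    (hfx : G'.ends f = s(fV x, v0)) (hgy : G'.ends g = s(fV y, v0)) :
    ∀ v ∈ G.ends d, fV v ∈ vertsOf G' F := by
  intro v hv
  rw [hd, Sym2.mem_iff] at hv
  rcases hv with rfl | rfl
  · exact mem_vertsOf_of_ends hf hfx
  · exact mem_vertsOf_of_ends hg hgy

/-- Two edges from the new vertex recover the gain of a deleted edge. -/
lemma gain_eq_of_pair {G G' : GainGraph} {F : Finset G'.E} {fV : G.V → G'.V} {v0 : G'.V}
    {d : G.E} {x y : G.V} {f g : G'.E} {σ : G'.V → ℤˣ} (hσ : IsPotential G' F σ)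
    (hd : G.ends d = s(x, y)) (hf : f ∈ F) (hg : g ∈ F)
    (hfx : G'.ends f = s(fV x, v0)) (hgy : G'.ends g = s(fV y, v0))
    (hgain : G'.gain f * G'.gain g = G.gain d) :
    ∀ a b, G.ends d = s(a, b) → G.gain d = σ (fV a) * σ (fV b) := by
  intro a b hab
  have key : G.gain d = σ (fV x) * σ (fV y) := by
    rw [← hgain, hσ f hf _ _ hfx, hσ g hg _ _ hgy, mul_mul_mul_comm,
      Int.units_mul_self, mul_one]
  rw [hd, Sym2.eq_iff] at hab
  rcases hab with ⟨rfl, rfl⟩ | ⟨rfl, rfl⟩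
  · exact key
  · rw [key, mul_comm]

lemma IsPotential.not_parallel {G : GainGraph} {F : Finset G.E} {σ : G.V → ℤˣ}
    (hσ : IsPotential G F σ) {f g : G.E} (hf : f ∈ F) (hg : g ∈ F) {a b : G.V}
    (hfab : G.ends f = s(a, b)) (hgab : G.ends g = s(a, b)) (h1 : G.gain f = 1)
    (h2 : G.gain g = -1) : False := by
  have := (hσ f hf _ _ hfab).trans (hσ g hg _ _ hgab).symm
  rw [h1, h2] at this
  exact absurd this (by decide)

lemma Tight220.of_grownWith_two {G G' : GainGraph} (hG : Tight220 G) {v0 : G'.V} {e1 e2 : G'.E}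
    {fV : G.V → G'.V}
    (h : GrownWith G G' v0 (fun _ => False) (fun e => e = e1 ∨ e = e2) fV)
    (hne : e1 ≠ e2) (h1 : v0 ∈ G'.ends e1) (h2 : v0 ∈ G'.ends e2) : Tight220 G' := by
  have hN : ∀ F : Finset G'.E, (F ∩ {e1, e2}).card ≤ 2 := fun F =>
    (Finset.card_le_card Finset.inter_subset_right).trans (Finset.card_pair hne).le
  refine hG.of_grownWith h ∅ (by simp) {e1, e2} (by simp) (by simp [Finset.card_pair hne])
    (by simp [h1, h2]) (fun F => ⟨∅, by simp, by simpa using hN F, by simp⟩)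
    (fun F σ _ => ⟨∅, by simp, by simpa using hN F, by simp, by simp [IsPotential]⟩)

lemma Tight220.of_grownWith_three {G G' : GainGraph} (hG : Tight220 G) {v0 : G'.V} {d : G.E}
    {f1 f2 f3 : G'.E} {fV : G.V → G'.V}
    (h : GrownWith G G' v0 (fun e => e = d) (fun e => e = f1 ∨ e = f2 ∨ e = f3) fV)
    (h12 : f1 ≠ f2) (h13 : f1 ≠ f3) (h23 : f2 ≠ f3) (h1 : v0 ∈ G'.ends f1)
    (h2 : v0 ∈ G'.ends f2) (h3 : v0 ∈ G'.ends f3)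
    (hcount : ∀ F : Finset G'.E, f1 ∈ F → f2 ∈ F → f3 ∈ F →
      ∀ v ∈ G.ends d, fV v ∈ vertsOf G' F)
    (hbal : ∀ (F : Finset G'.E) (σ : G'.V → ℤˣ), IsPotential G' F σ → f1 ∈ F → f2 ∈ F → f3 ∈ F →
      ∀ a b, G.ends d = s(a, b) → G.gain d = σ (fV a) * σ (fV b)) : Tight220 G' := by
  have hN3 : ({f1, f2, f3} : Finset G'.E).card = 3 := by simp [h12, h13, h23]
  have key : ∀ (F : Finset G'.E) (A : G.E → Prop), (f1 ∈ F → f2 ∈ F → f3 ∈ F → A d) →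
      ∃ Q ⊆ ({d} : Finset G.E), (F ∩ {f1, f2, f3}).card ≤ Q.card + 2 ∧ ∀ e ∈ Q, A e := by
    intro F A hA
    by_cases hF : {f1, f2, f3} ⊆ F
    · refine ⟨{d}, subset_rfl, ?_, ?_⟩
      · rw [Finset.inter_eq_right.2 hF, hN3]; simp
      · simpa using hA (hF (by simp)) (hF (by simp)) (hF (by simp))
    · refine ⟨∅, by simp, ?_, by simp⟩
      have : F ∩ {f1, f2, f3} ⊂ {f1, f2, f3} :=
        Finset.ssubset_iff_subset_ne.2
          ⟨Finset.inter_subset_right, fun h => hF (Finset.inter_eq_right.1 h)⟩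
      have := Finset.card_lt_card this
      simp only [Finset.card_empty]
      omega
  refine hG.of_grownWith h {d} (by simp) {f1, f2, f3} (by simp) (by simpa using hN3)
    (by simp [h1, h2, h3]) (fun F => key F _ (hcount F)) (fun F σ hσ => ?_)
  obtain ⟨Q, hQ, hc, hA⟩ := key F (fun e => (∀ v ∈ G.ends e, fV v ∈ vertsOf G' F) ∧
    ∀ a b, G.ends e = s(a, b) → G.gain e = σ (fV a) * σ (fV b))
    (fun m1 m2 m3 => ⟨hcount F m1 m2 m3, hbal F σ hσ m1 m2 m3⟩)
  exact ⟨Q, hQ, hc, fun e he => (hA e he).1, fun e he => (hA e he).2⟩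

lemma card_inter_four_le {α : Type*} [DecidableEq α] (F : Finset α) (a b c d : α) :
    (F ∩ {a, b, c, d}).card ≤ (if a ∈ F then 1 else 0) + (if b ∈ F then 1 else 0) +
      (if c ∈ F then 1 else 0) + (if d ∈ F then 1 else 0) := by
  have step : ∀ (x : α) (s : Finset α),
      (F ∩ insert x s).card ≤ (if x ∈ F then 1 else 0) + (F ∩ s).card := by
    intro x s
    split_ifs with hx
    · rw [Finset.inter_insert_of_mem hx, add_comm]
      exact Finset.card_insert_le _ _
    · rw [Finset.inter_insert_of_notMem hx, zero_add]
  have h1 := step a {b, c, d}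
  have h2 := step b {c, d}
  have h3 := step c {d}
  have h4 := step d ∅
  simp only [Finset.inter_empty, Finset.card_empty, insert_empty_eq] at h4
  omega

lemma Tight220.of_grownWith_four {G G' : GainGraph} (hG : Tight220 G) {v0 : G'.V} {d1 d2 : G.E}
    {f1 f2 f3 f4 : G'.E} {fV : G.V → G'.V}
    (h : GrownWith G G' v0 (fun e => e = d1 ∨ e = d2)
      (fun e => e = f1 ∨ e = f2 ∨ e = f3 ∨ e = f4) fV)
    (hd : d1 ≠ d2) (h12 : f1 ≠ f2) (h13 : f1 ≠ f3) (h14 : f1 ≠ f4) (h23 : f2 ≠ f3)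
    (h24 : f2 ≠ f4) (h34 : f3 ≠ f4) (h1 : v0 ∈ G'.ends f1)
    (h2 : v0 ∈ G'.ends f2) (h3 : v0 ∈ G'.ends f3) (h4 : v0 ∈ G'.ends f4)
    (hrec : ∀ F : Finset G'.E, ∀ A : G.E → Prop,
      ((∀ e, (∀ v ∈ G.ends e, fV v ∈ vertsOf G' F) → A e) ∨
        ∃ σ, IsPotential G' F σ ∧ ∀ e, (∀ v ∈ G.ends e, fV v ∈ vertsOf G' F) →
          (∀ a b, G.ends e = s(a, b) → G.gain e = σ (fV a) * σ (fV b)) → A e) →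
      (f1 ∈ F → f2 ∈ F → f3 ∈ F → A d1 ∨ A d2) ∧ (f1 ∈ F → f2 ∈ F → f4 ∈ F → A d1 ∨ A d2) ∧
      (f1 ∈ F → f3 ∈ F → f4 ∈ F → A d1 ∨ A d2) ∧ (f2 ∈ F → f3 ∈ F → f4 ∈ F → A d1 ∨ A d2) ∧
      (f1 ∈ F → f2 ∈ F → f3 ∈ F → f4 ∈ F → A d1 ∧ A d2)) : Tight220 G' := by
  have key : ∀ (F : Finset G'.E) (A : G.E → Prop),
      ((∀ e, (∀ v ∈ G.ends e, fV v ∈ vertsOf G' F) → A e) ∨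
        ∃ σ, IsPotential G' F σ ∧ ∀ e, (∀ v ∈ G.ends e, fV v ∈ vertsOf G' F) →
          (∀ a b, G.ends e = s(a, b) → G.gain e = σ (fV a) * σ (fV b)) → A e) →
      ∃ Q ⊆ ({d1, d2} : Finset G.E), (F ∩ {f1, f2, f3, f4}).card ≤ Q.card + 2 ∧
        ∀ e ∈ Q, A e := by
    intro F A hA
    obtain ⟨r1, r2, r3, r4, r5⟩ := hrec F A hA
    have hc := card_inter_four_le F f1 f2 f3 f4
    have one : A d1 ∨ A d2 → (F ∩ {f1, f2, f3, f4}).card ≤ 3 → ∃ Q ⊆ ({d1, d2} : Finset G.E),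
        (F ∩ {f1, f2, f3, f4}).card ≤ Q.card + 2 ∧ ∀ e ∈ Q, A e := by
      rintro (ha | ha) h3
      · exact ⟨{d1}, by simp, by simpa using h3, by simpa using ha⟩
      · exact ⟨{d2}, by simp, by simpa using h3, by simpa using ha⟩
    by_cases hall : f1 ∈ F ∧ f2 ∈ F ∧ f3 ∈ F ∧ f4 ∈ F
    · obtain ⟨m1, m2, m3, m4⟩ := hall
      refine ⟨{d1, d2}, subset_rfl, ?_, by simpa using r5 m1 m2 m3 m4⟩
      rw [Finset.card_pair hd]
      simpa [m1, m2, m3, m4] using hc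
    · by_cases h3 : (F ∩ {f1, f2, f3, f4}).card ≤ 2
      · exact ⟨∅, by simp, by simpa using h3, by simp⟩
      · refine one ?_ ?_
        · by_cases m1 : f1 ∈ F <;> by_cases m2 : f2 ∈ F <;> by_cases m3 : f3 ∈ F <;>
            by_cases m4 : f4 ∈ F <;> simp only [m1, m2, m3, m4, if_true, if_false] at hc <;>
            first | omega | exact r1 m1 m2 m3 | exact r2 m1 m2 m4 | exact r3 m1 m3 m4 |
              exact r4 m2 m3 m4
        · by_cases m1 : f1 ∈ F <;> by_cases m2 : f2 ∈ F <;> by_cases m3 : f3 ∈ F <;>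
            by_cases m4 : f4 ∈ F <;> simp only [m1, m2, m3, m4, if_true, if_false] at hc <;>
            first | omega | exact absurd ⟨m1, m2, m3, m4⟩ hall
  refine hG.of_grownWith h {d1, d2} (by simp) {f1, f2, f3, f4} (by simp)
    (by simp [hd, h12, h13, h14, h23, h24, h34]) (by simp [h1, h2, h3, h4])
    (fun F => key F _ (Or.inl fun e he => he)) (fun F σ hσ => ?_)
  obtain ⟨Q, hQ, hc, hA⟩ := key F (fun e => (∀ v ∈ G.ends e, fV v ∈ vertsOf G' F) ∧
    ∀ a b, G.ends e = s(a, b) → G.gain e = σ (fV a) * σ (fV b))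
    (Or.inr ⟨σ, hσ, fun e h1 h2 => ⟨h1, h2⟩⟩)
  exact ⟨Q, hQ, hc, fun e he => (hA e he).1, fun e he => (hA e he).2⟩

lemma H1a.tight220 {G G' : GainGraph} (hG : Tight220 G) (h : H1a G G') : Tight220 G' := by
  obtain ⟨v0, e1, e2, x, y, fV, hg, hne, -, -, -, h1, h2⟩ := h
  exact hG.of_grownWith_two hg hne (by simp [h1]) (by simp [h2])

lemma H1b.tight220 {G G' : GainGraph} (hG : Tight220 G) (h : H1b G G') : Tight220 G' := by
  obtain ⟨v0, e1, e2, x, fV, hg, hne, -, h1, -, h2, -⟩ := h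
  exact hG.of_grownWith_two hg hne (by simp [h1]) (by simp [h2])

lemma H1c.tight220 {G G' : GainGraph} (hG : Tight220 G) (h : H1c G G') : Tight220 G' := by
  obtain ⟨v0, e1, e2, x, fV, hg, hne, -, h1, -, h2⟩ := h
  exact hG.of_grownWith_two hg hne (by simp [h1]) (by simp [h2])

lemma H2a.tight220 {G G' : GainGraph} (hG : Tight220 G) (h : H2a G G') : Tight220 G' := by
  obtain ⟨d, x, y, z, v0, f1, f2, f3, fV, hg, -, hd, h12, h13, h23, -, -, h1, h2, h3, hgain⟩ := h
  exact hG.of_grownWith_three hg h12 h13 h23 (by simp [h1]) (by simp [h2]) (by simp [h3])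
    (fun F m1 m2 _ => ends_mem_vertsOf_of_pair hd m1 m2 h1 h2)
    (fun F σ hσ m1 m2 _ => gain_eq_of_pair hσ hd m1 m2 h1 h2 hgain)

lemma H2b.tight220 {G G' : GainGraph} (hG : Tight220 G) (h : H2b G G') : Tight220 G' := by
  obtain ⟨d, x, y, v0, f1, f2, f3, fV, hg, -, hd, h12, h13, h23, h1, g1, h2, g2, h3⟩ := h
  exact hG.of_grownWith_three hg h12 h13 h23 (by simp [h1]) (by simp [h2]) (by simp [h3])
    (fun F m1 _ m3 => ends_mem_vertsOf_of_pair hd m1 m3 h1 h3)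
    (fun F σ hσ m1 m2 _ => (hσ.not_parallel m1 m2 h1 h2 g1 g2).elim)

lemma H2c.tight220 {G G' : GainGraph} (hG : Tight220 G) (h : H2c G G') : Tight220 G' := by
  obtain ⟨d, x, y, v0, f1, f2, f3, fV, hg, hd, -, h12, h13, h23, h1, g1, h2, g2, h3⟩ := h
  exact hG.of_grownWith_three hg h12 h13 h23 (by simp [h1]) (by simp [h2]) (by simp [h3])
    (fun F m1 m2 _ => ends_mem_vertsOf_of_pair hd m1 m2 h1 h2)
    (fun F σ hσ m1 m2 _ => (hσ.not_parallel m1 m2 h1 h2 g1 g2).elim)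

lemma H2d.tight220 {G G' : GainGraph} (hG : Tight220 G) (h : H2d G G') : Tight220 G' := by
  obtain ⟨d, x, y, v0, f1, f2, f3, fV, hg, -, hd, h12, h13, h23, h1, h2, hgain, h3, -⟩ := h
  exact hG.of_grownWith_three hg h12 h13 h23 (by simp [h1]) (by simp [h2]) (by simp [h3])
    (fun F m1 m2 _ => ends_mem_vertsOf_of_pair hd m1 m2 h1 h2)
    (fun F σ hσ m1 m2 _ => gain_eq_of_pair hσ hd m1 m2 h1 h2 hgain)

lemma H2e.tight220 {G G' : GainGraph} (hG : Tight220 G) (h : H2e G G') : Tight220 G' := by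
  obtain ⟨d, x, v0, f1, f2, f3, fV, hg, hd, h12, h13, h23, h1, g1, h2, g2, h3, -⟩ := h
  exact hG.of_grownWith_three hg h12 h13 h23 (by simp [h1]) (by simp [h2]) (by simp [h3])
    (fun F m1 m2 _ => ends_mem_vertsOf_of_pair hd m1 m2 h1 h2)
    (fun F σ hσ m1 m2 _ => (hσ.not_parallel m1 m2 h1 h2 g1 g2).elim)

lemma H3a.tight220 {G G' : GainGraph} (hG : Tight220 G) (h : H3a G G') : Tight220 G' := by
  obtain ⟨d1, d2, x, y, z, w, v0, f1, f2, f3, f4, fV, hg, hd, hd1, hd2, -, -, -, -, -, -,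
    h12, h13, h14, h23, h24, h34, h1, h2, h3, h4, hg1, hg2⟩ := h
  refine hG.of_grownWith_four hg hd h12 h13 h14 h23 h24 h34 (by simp [h1]) (by simp [h2])
    (by simp [h3]) (by simp [h4]) fun F A hA => ?_
  have r12 : f1 ∈ F → f2 ∈ F → A d1 := fun m1 m2 => by
    have he := ends_mem_vertsOf_of_pair hd1 m1 m2 h1 h2
    rcases hA with hA | ⟨σ, hσ, hA⟩
    · exact hA _ he
    · exact hA _ he (gain_eq_of_pair hσ hd1 m1 m2 h1 h2 hg1)
  have r34 : f3 ∈ F → f4 ∈ F → A d2 := fun m3 m4 => by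
    have he := ends_mem_vertsOf_of_pair hd2 m3 m4 h3 h4
    rcases hA with hA | ⟨σ, hσ, hA⟩
    · exact hA _ he
    · exact hA _ he (gain_eq_of_pair hσ hd2 m3 m4 h3 h4 hg2)
  exact ⟨fun m1 m2 _ => .inl (r12 m1 m2), fun m1 m2 _ => .inl (r12 m1 m2),
    fun _ m3 m4 => .inr (r34 m3 m4), fun _ m3 m4 => .inr (r34 m3 m4),
    fun m1 m2 m3 m4 => ⟨r12 m1 m2, r34 m3 m4⟩⟩

lemma H3b.tight220 {G G' : GainGraph} (hG : Tight220 G) (h : H3b G G') : Tight220 G' := by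
  obtain ⟨d1, d2, x, y, w, v0, f1, f2, f3, f4, fV, hg, hd, hd1, hd2, -, -, -,
    h12, h13, h14, h23, h24, h34, h1, g1, h2, g2, h3, g3, h4, g4⟩ := h
  refine hG.of_grownWith_four hg hd h12 h13 h14 h23 h24 h34 (by simp [h1]) (by simp [h2])
    (by simp [h3]) (by simp [h4]) fun F A hA => ?_
  have r12 : f1 ∈ F → f2 ∈ F → A d1 := fun m1 m2 => by
    have he := ends_mem_vertsOf_of_pair hd1 m1 m2 h1 h2
    rcases hA with hA | ⟨σ, hσ, hA⟩
    · exact hA _ he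
    · exact hA _ he (gain_eq_of_pair hσ hd1 m1 m2 h1 h2 (by rw [g1, g2, mul_one]))
  have r34 : f3 ∈ F → f4 ∈ F → A d2 := fun m3 m4 => by
    have he := ends_mem_vertsOf_of_pair hd2 m3 m4 h3 h4
    rcases hA with hA | ⟨σ, hσ, hA⟩
    · exact hA _ he
    · exact hA _ he (gain_eq_of_pair hσ hd2 m3 m4 h3 h4 (by rw [g3, g4]; simp))
  exact ⟨fun m1 m2 _ => .inl (r12 m1 m2), fun m1 m2 _ => .inl (r12 m1 m2),
    fun _ m3 m4 => .inr (r34 m3 m4), fun _ m3 m4 => .inr (r34 m3 m4),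
    fun m1 m2 m3 m4 => ⟨r12 m1 m2, r34 m3 m4⟩⟩

lemma H3c.tight220 {G G' : GainGraph} (hG : Tight220 G) (h : H3c G G') : Tight220 G' := by
  obtain ⟨d1, d2, x, z, w, v0, f1, f2, f3, f4, fV, hg, hd, hd1, hd2, -, -, -,
    h12, h13, h14, h23, h24, h34, h1, g1, h2, g2, h3, h4, hg2⟩ := h
  refine hG.of_grownWith_four hg hd h12 h13 h14 h23 h24 h34 (by simp [h1]) (by simp [h2])
    (by simp [h3]) (by simp [h4]) fun F A hA => ?_
  have r12 : f1 ∈ F → f2 ∈ F → A d1 := fun m1 m2 => by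
    rcases hA with hA | ⟨σ, hσ, -⟩
    · exact hA _ (ends_mem_vertsOf_of_pair hd1 m1 m2 h1 h2)
    · exact (hσ.not_parallel m1 m2 h1 h2 g1 g2).elim
  have r34 : f3 ∈ F → f4 ∈ F → A d2 := fun m3 m4 => by
    have he := ends_mem_vertsOf_of_pair hd2 m3 m4 h3 h4
    rcases hA with hA | ⟨σ, hσ, hA⟩
    · exact hA _ he
    · exact hA _ he (gain_eq_of_pair hσ hd2 m3 m4 h3 h4 hg2)
  exact ⟨fun m1 m2 _ => .inl (r12 m1 m2), fun m1 m2 _ => .inl (r12 m1 m2),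
    fun _ m3 m4 => .inr (r34 m3 m4), fun _ m3 m4 => .inr (r34 m3 m4),
    fun m1 m2 m3 m4 => ⟨r12 m1 m2, r34 m3 m4⟩⟩

lemma H3d.tight220 {G G' : GainGraph} (hG : Tight220 G) (h : H3d G G') : Tight220 G' := by
  obtain ⟨d1, d2, x, z, v0, f1, f2, f3, f4, fV, hg, hd, hd1, hd2, -,
    h12, h13, h14, h23, h24, h34, h1, g1, h2, g2, h3, g3, h4, g4⟩ := h
  refine hG.of_grownWith_four hg hd h12 h13 h14 h23 h24 h34 (by simp [h1]) (by simp [h2])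
    (by simp [h3]) (by simp [h4]) fun F A hA => ?_
  have r12 : f1 ∈ F → f2 ∈ F → A d1 := fun m1 m2 => by
    rcases hA with hA | ⟨σ, hσ, -⟩
    · exact hA _ (ends_mem_vertsOf_of_pair hd1 m1 m2 h1 h2)
    · exact (hσ.not_parallel m1 m2 h1 h2 g1 g2).elim
  have r34 : f3 ∈ F → f4 ∈ F → A d2 := fun m3 m4 => by
    rcases hA with hA | ⟨σ, hσ, -⟩
    · exact hA _ (ends_mem_vertsOf_of_pair hd2 m3 m4 h3 h4)
    · exact (hσ.not_parallel m3 m4 h3 h4 g3 g4).elim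
  exact ⟨fun m1 m2 _ => .inl (r12 m1 m2), fun m1 m2 _ => .inl (r12 m1 m2),
    fun _ m3 m4 => .inr (r34 m3 m4), fun _ m3 m4 => .inr (r34 m3 m4),
    fun m1 m2 m3 m4 => ⟨r12 m1 m2, r34 m3 m4⟩⟩

lemma ends_mem_image_of_contract {G G' : GainGraph} {π : G'.V → G.V} {P : Finset G.E}
    {F : Finset G'.E}
    (hP : ∀ e ∈ P, ∃ e' ∈ F, Sym2.map π (G'.ends e') = G.ends e ∧ G'.gain e' = G.gain e) :
    ∀ e ∈ P, ∀ v ∈ G.ends e, v ∈ (vertsOf G' F).image π := by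
  intro e he v hv
  obtain ⟨e', he', hends, -⟩ := hP e he
  rw [← hends, Sym2.mem_map] at hv
  obtain ⟨u, hu, rfl⟩ := hv
  exact Finset.mem_image_of_mem _ (mem_vertsOf.2 ⟨e', he', hu⟩)

/-- A potential that is constant on the fibres of a contraction descends. -/
lemma IsPotential.exists_of_contract {G G' : GainGraph} {π : G'.V → G.V} {P : Finset G.E}
    {F : Finset G'.E} {σ : G'.V → ℤˣ} (hσ : IsPotential G' F σ)
    (hP : ∀ e ∈ P, ∃ e' ∈ F, Sym2.map π (G'.ends e') = G.ends e ∧ G'.gain e' = G.gain e)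
    (hfib : ∀ u ∈ vertsOf G' F, ∀ w ∈ vertsOf G' F, π u = π w → σ u = σ w) :
    ∃ τ, IsPotential G P τ := by
  classical
  let τ : G.V → ℤˣ := fun x => if h : ∃ u ∈ vertsOf G' F, π u = x then σ h.choose else 1
  have hτ : ∀ u ∈ vertsOf G' F, τ (π u) = σ u := by
    intro u hu
    have h : ∃ w ∈ vertsOf G' F, π w = π u := ⟨u, hu, rfl⟩
    simp only [τ, dif_pos h]
    exact hfib _ h.choose_spec.1 _ hu h.choose_spec.2
  refine ⟨τ, fun e he a b hab => ?_⟩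
  obtain ⟨e', he', hends, hgain⟩ := hP e he
  induction hx : G'.ends e' using Sym2.ind with
  | h x y =>
    have hxy := hσ e' he' x y hx
    have hx' : x ∈ vertsOf G' F := mem_vertsOf.2 ⟨e', he', by simp [hx]⟩
    have hy' : y ∈ vertsOf G' F := mem_vertsOf.2 ⟨e', he', by simp [hx]⟩
    rw [hab, hx, Sym2.map_mk, Sym2.eq_iff] at hends
    rcases hends with ⟨rfl, rfl⟩ | ⟨rfl, rfl⟩
    · rw [hτ x hx', hτ y hy', ← hgain, hxy]
    · rw [hτ x hx', hτ y hy', ← hgain, hxy, mul_comm]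

lemma vertsOf_nonempty {G : GainGraph} {F : Finset G.E} (hF : F.Nonempty) :
    (vertsOf G F).Nonempty := by
  obtain ⟨e, he⟩ := hF
  induction hx : G.ends e using Sym2.ind with
  | h a b => exact ⟨a, mem_vertsOf_of_ends he hx⟩

lemma VertexSplit.tight220 {G G' : GainGraph} (hG : Tight220 G) (h : VertexSplit G G') :
    Tight220 G' := by
  classical
  obtain ⟨v1, v2, e12, N1, D, movedLoop, v0, g1, g2, fV, fE, mv, hv12, he12, hv1, hv2, -, hD, hfV,
    hfv0, hsurjV, hfE, hends, hgain, hmv, hmvE, hg12, hg1, gain1, hg2, gain2, hsurjE, hfEg, hmvg,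
    hfEmv⟩ := h
  have hπ : ∀ v', ∃ u, v' = v0 ∧ u = v1 ∨ fV u = v' := by
    intro v'
    by_cases h : v' = v0
    · exact ⟨v1, Or.inl ⟨h, rfl⟩⟩
    · exact (hsurjV v' h).imp fun u hu => Or.inr hu
  choose π hπ using hπ
  have π0 : π v0 = v1 := (hπ v0).elim (fun h => h.2) fun h => absurd h (hfv0 _)
  have πf : ∀ u, π (fV u) = u := fun u =>
    (hπ (fV u)).elim (fun h => absurd h.1 (hfv0 u)) fun h => hfV h
  let φ : G.E → G'.E := fun e => if h : e ∈ D then mv ⟨e, h⟩ else fE ⟨e, h⟩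
  have hφ : Function.Injective φ := by
    intro e e' hee
    by_cases h : e ∈ D <;> by_cases h' : e' ∈ D <;> simp only [φ, h, h', dite_true, dite_false] at hee
    · exact congrArg Subtype.val (hmv hee)
    · exact absurd hee.symm (hfEmv _ _)
    · exact absurd hee (hfEmv _ _)
    · exact congrArg Subtype.val (hfE hee)
  have hφC : ∀ e, φ e ∉ ({g1, g2} : Finset G'.E) := by
    intro e
    by_cases h : e ∈ D <;> simp only [φ, h, dite_true, dite_false, Finset.mem_insert,
      Finset.mem_singleton, not_or]
    · exact hmvg _
    · exact hfEg _
  have hφsurj : ∀ e', e' ∉ ({g1, g2} : Finset G'.E) → ∃ e, φ e = e' := by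
    intro e' he'
    simp only [Finset.mem_insert, Finset.mem_singleton, not_or] at he'
    rcases hsurjE e' with h | h | ⟨e, rfl⟩ | ⟨e, rfl⟩
    · exact absurd h he'.1
    · exact absurd h he'.2
    · exact ⟨e.1, by simp [φ, e.2]⟩
    · exact ⟨e.1, by simp [φ, e.2]⟩
  have hφc : ∀ e, Sym2.map π (G'.ends (φ e)) = G.ends e ∧ G'.gain (φ e) = G.gain e := by
    intro e
    by_cases h : e ∈ D <;> simp only [φ, h, dite_true, dite_false]
    · rcases (hD e).1 h with ⟨u, hu, hue⟩ | ⟨-, hl⟩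
      · obtain ⟨h1, h2⟩ := (hmvE ⟨e, h⟩).2 u hu hue
        exact ⟨by rw [h1, hue, Sym2.map_mk, π0, πf], h2⟩
      · obtain ⟨h1, h2⟩ := (hmvE ⟨e, h⟩).1 hl
        exact ⟨by rw [h1, hl, Sym2.map_mk, π0], by rw [h2, G.loop_gain e (by simp [hl])]⟩
    · refine ⟨?_, hgain _⟩
      rw [hends, Sym2.map_map]
      have : π ∘ fV = id := funext πf
      rw [this, Sym2.map_id, id]
  have hφ12 : G'.ends (φ e12) = s(fV v1, fV v2) := by
    have h12 : e12 ∉ D := by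
      intro h
      rcases (hD e12).1 h with ⟨u, hu, hue⟩ | ⟨-, hl⟩
      · rw [he12, Sym2.eq_iff] at hue
        rcases hue with ⟨-, rfl⟩ | ⟨rfl, -⟩
        · exact hv2 hu
        · exact hv1 hu
      · rw [he12, Sym2.eq_iff] at hl
        rcases hl with ⟨-, h⟩ | ⟨-, h⟩ <;> exact hv12 h.symm
    simp only [φ, h12, dite_false, hends, he12, Sym2.map_mk]
  let P : Finset G'.E → Finset G.E := fun F =>
    (Finset.univ.filter fun e => φ e ∈ F) ∪ if g2 ∈ F then {e12} else ∅
  have hP : ∀ F, ∀ e ∈ P F,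
      ∃ e' ∈ F, Sym2.map π (G'.ends e') = G.ends e ∧ G'.gain e' = G.gain e := by
    intro F e he
    rcases Finset.mem_union.1 he with he | he
    · exact ⟨φ e, (Finset.mem_filter.1 he).2, hφc e⟩
    · split_ifs at he with hF
      · rw [Finset.mem_singleton] at he
        subst he
        exact ⟨g2, hF, by rw [hg2, Sym2.map_mk, π0, πf, he12], gain2⟩
      · simp at he
  have hP2 : ∀ F, F.card ≤ (P F).card + 2 := by
    intro F
    have h1 := card_le_card_filter_add_card_inter _ hφsurj F
    have h2 := Finset.card_le_card (Finset.inter_subset_right (s₁ := F) (s₂ := {g1, g2}))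
    have h3 := Finset.card_le_two (a := g1) (b := g2)
    have h4 : (Finset.univ.filter fun e => φ e ∈ F).card ≤ (P F).card :=
      Finset.card_le_card Finset.subset_union_left
    omega
  have hP0 : ∀ F, g1 ∉ F → ¬ (g2 ∈ F ∧ φ e12 ∈ F) → F.card ≤ (P F).card := by
    intro F h1 h2
    have h3 := card_le_card_filter_add_card_inter _ hφsurj F
    rw [Finset.inter_insert_of_notMem h1] at h3
    by_cases hF : g2 ∈ F
    · have hd : Disjoint (Finset.univ.filter fun e => φ e ∈ F) {e12} := by
        rw [Finset.disjoint_singleton_right]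
        simpa using fun h => h2 ⟨hF, h⟩
      have h4 := Finset.card_le_card (Finset.inter_subset_right (s₁ := F) (s₂ := {g2}))
      simp only [P, hF, if_true]
      rw [Finset.card_union_of_disjoint hd, Finset.card_singleton]
      rw [Finset.card_singleton] at h4
      omega
    · rw [Finset.inter_singleton_of_notMem hF, Finset.card_empty] at h3
      simpa [P, hF] using h3
  have both_of : ∀ F, ¬ (v0 ∈ vertsOf G' F ∧ fV v1 ∈ vertsOf G' F) →
      g1 ∉ F ∧ ¬ (g2 ∈ F ∧ φ e12 ∈ F) := by
    intro F h
    refine ⟨fun hg => h ⟨mem_vertsOf_of_ends hg hg1, mem_vertsOf.2 ⟨g1, hg, by simp [hg1]⟩⟩,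
      fun hg => h ⟨mem_vertsOf_of_ends hg.1 hg2, mem_vertsOf_of_ends hg.2 hφ12⟩⟩
  have card_T : ∀ F, v0 ∈ vertsOf G' F → fV v1 ∈ vertsOf G' F →
      ((vertsOf G' F).image π).card + 1 ≤ (vertsOf G' F).card := by
    intro F h0 h1
    have h2 : (vertsOf G' F).image π ⊆ ((vertsOf G' F).erase v0).image π := by
      intro v hv
      obtain ⟨u, hu, rfl⟩ := Finset.mem_image.1 hv
      by_cases h : u = v0
      · rw [h, π0]
        exact Finset.mem_image.2 ⟨fV v1, Finset.mem_erase.2 ⟨hfv0 _, h1⟩, πf _⟩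
      · exact Finset.mem_image_of_mem _ (Finset.mem_erase.2 ⟨h, hu⟩)
    have h3 := (Finset.card_le_card h2).trans Finset.card_image_le
    have h4 := Finset.card_erase_add_one h0
    omega
  have card_T' : ∀ F, ((vertsOf G' F).image π).card ≤ (vertsOf G' F).card :=
    fun F => Finset.card_image_le
  have fib : ∀ u w, π u = π w → u = w ∨ u = v0 ∧ w = fV v1 ∨ u = fV v1 ∧ w = v0 := by
    intro u w huw
    rcases hπ u with ⟨hu, hu'⟩ | hu <;> rcases hπ w with ⟨hw, hw'⟩ | hw
    · exact Or.inl (hu.trans hw.symm)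
    · exact Or.inr (Or.inl ⟨hu, by rw [← hw, ← huw, hu']⟩)
    · exact Or.inr (Or.inr ⟨by rw [← hu, huw, hw'], hw⟩)
    · exact Or.inl (by rw [← hu, ← hw, huw])
  constructor
  · refine hG.1.of_reduction (fun F => ?_) fun F σ hF hσ => ?_
    · refine ⟨P F, _, ends_mem_image_of_contract (hP F), ?_⟩
      by_cases hb : v0 ∈ vertsOf G' F ∧ fV v1 ∈ vertsOf G' F
      · have := card_T F hb.1 hb.2
        have := hP2 F
        omega
      · have := hP0 F (both_of F hb).1 (both_of F hb).2
        have := card_T' F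
        omega
    · refine ⟨P F, _, ends_mem_image_of_contract (hP F), ?_⟩
      have hT := (vertsOf_nonempty hF).image π
      by_cases hb : v0 ∈ vertsOf G' F ∧ fV v1 ∈ vertsOf G' F
      · have h1 := card_T F hb.1 hb.2
        by_cases hs : σ v0 = σ (fV v1)
        · refine Or.inl ⟨hT, hσ.exists_of_contract (hP F) ?_, ?_⟩
          · rintro u - w - huw
            rcases fib u w huw with rfl | ⟨rfl, rfl⟩ | ⟨rfl, rfl⟩
            exacts [rfl, hs, hs.symm]
          · have := hP2 F
            omega
        · refine Or.inr ?_
          have h2 : g1 ∉ F := fun hg => hs <| by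
            have := hσ g1 hg _ _ hg1
            rw [gain1] at this
            rw [← mul_left_inj (σ (fV v1)), ← this, Int.units_mul_self]
          have h3 : ¬ (g2 ∈ F ∧ φ e12 ∈ F) := fun hg => hs <| by
            have h4 := hσ g2 hg.1 _ _ hg2
            have h5 := hσ _ hg.2 _ _ hφ12
            rw [(hφc e12).2, ← gain2, h4] at h5
            exact mul_right_cancel h5
          have := hP0 F h2 h3
          omega
      · refine Or.inl ⟨hT, hσ.exists_of_contract (hP F) ?_, ?_⟩
        · intro u hu w hw huw
          rcases fib u w huw with rfl | ⟨rfl, rfl⟩ | ⟨rfl, rfl⟩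
          exacts [rfl, absurd ⟨hu, hw⟩ hb, absurd ⟨hw, hu⟩ hb]
        · have := hP0 F (both_of F hb).1 (both_of F hb).2
          have := card_T' F
          omega
  · have hV := card_eq_card_add_of_injective hfV {v0} (by simpa using hfv0) (by simpa using hsurjV)
    have hE := card_eq_card_add_of_injective hφ {g1, g2} hφC hφsurj
    rw [Finset.card_singleton] at hV
    rw [Finset.card_pair hg12] at hE
    have := hG.2
    omega

/-- Counting edges of a `K₄` on a subset of its vertices: `m` marks the chosen vertices, and
edges are counted only between vertices of equal colour `t`. -/
lemma k4_count : ∀ ma mb mc md ta tb tc td : Bool,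
    let s := ma.toNat + mb.toNat + mc.toNat + md.toNat
    let A := (ma && mb && ta == tb).toNat + (ma && mc && ta == tc).toNat +
      (ma && md && ta == td).toNat + (mb && mc && tb == tc).toNat +
      (mb && md && tb == td).toNat + (mc && md && tc == td).toNat
    (A + 2 ≤ 2 * s ∨ s = 0 ∧ A = 0) ∧
      ((ma && mb && ta != tb || ma && mc && ta != tc || ma && md && ta != td ||
        mb && mc && tb != tc || mb && md && tb != td || mc && md && tc != td) → A + 4 ≤ 2 * s) := by
  decide

lemma card_k4_le {α β : Type*} [DecidableEq α] [DecidableEq β] {F : Finset β}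
    {k : Fin 6 → β} {X : Finset α} {a b c d : α}
    (hne : a ≠ b ∧ a ≠ c ∧ a ≠ d ∧ b ≠ c ∧ b ≠ d ∧ c ≠ d) (t : α → Bool)
    (h0 : k 0 ∈ F → a ∈ X ∧ b ∈ X ∧ t a = t b) (h1 : k 1 ∈ F → a ∈ X ∧ c ∈ X ∧ t a = t c)
    (h2 : k 2 ∈ F → a ∈ X ∧ d ∈ X ∧ t a = t d) (h3 : k 3 ∈ F → b ∈ X ∧ c ∈ X ∧ t b = t c)
    (h4 : k 4 ∈ F → b ∈ X ∧ d ∈ X ∧ t b = t d) (h5 : k 5 ∈ F → c ∈ X ∧ d ∈ X ∧ t c = t d) :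
    ((F ∩ Finset.univ.image k).card + 2 ≤ 2 * (X ∩ {a, b, c, d}).card ∨
      (X ∩ {a, b, c, d}).card = 0 ∧ (F ∩ Finset.univ.image k).card = 0) ∧
    ((∃ u ∈ X ∩ {a, b, c, d}, ∃ w ∈ X ∩ {a, b, c, d}, t u ≠ t w) →
      (F ∩ Finset.univ.image k).card + 4 ≤ 2 * (X ∩ {a, b, c, d}).card) := by
  have hA : (F ∩ Finset.univ.image k).card ≤ ∑ i, if k i ∈ F then 1 else 0 := by
    rw [← Finset.card_filter]
    refine le_trans (Finset.card_le_card fun e he => ?_) (Finset.card_image_le (f := k))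
    obtain ⟨he, he'⟩ := Finset.mem_inter.1 he
    obtain ⟨i, -, rfl⟩ := Finset.mem_image.1 he'
    exact Finset.mem_image_of_mem _ (by simp [he])
  rw [Fin.sum_univ_six] at hA
  have hs : (X ∩ {a, b, c, d}).card = (decide (a ∈ X)).toNat + (decide (b ∈ X)).toNat +
      (decide (c ∈ X)).toNat + (decide (d ∈ X)).toNat := by
    obtain ⟨hab, hac, had, hbc, hbd, hcd⟩ := hne
    rw [Finset.inter_comm, ← Finset.filter_mem_eq_inter, Finset.card_filter,
      Finset.sum_insert (by simp [hab, hac, had]), Finset.sum_insert (by simp [hbc, hbd]),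
      Finset.sum_insert (by simp [hcd]), Finset.sum_singleton]
    simp only [Bool.toNat, Bool.cond_decide, add_assoc]
  have ind : ∀ {x y : α} {e : β}, (e ∈ F → x ∈ X ∧ y ∈ X ∧ t x = t y) →
      (if e ∈ F then 1 else 0) ≤ (decide (x ∈ X) && decide (y ∈ X) && t x == t y).toNat := by
    intro x y e h
    split_ifs with he
    · simp [h he]
    · exact Nat.zero_le _
  have i0 := ind h0
  have i1 := ind h1
  have i2 := ind h2
  have i3 := ind h3
  have i4 := ind h4
  have i5 := ind h5
  have key := k4_count (a ∈ X) (b ∈ X) (c ∈ X) (d ∈ X) (t a) (t b) (t c) (t d)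
  simp only at key
  rw [hs]
  refine ⟨by rcases key.1 with h | h <;> omega, fun ⟨u, hu, w, hw, huw⟩ => ?_⟩
  have := key.2 (by
    simp only [Finset.mem_inter, Finset.mem_insert, Finset.mem_singleton] at hu hw
    obtain ⟨hu, rfl | rfl | rfl | rfl⟩ := hu <;> obtain ⟨hw, rfl | rfl | rfl | rfl⟩ := hw <;>
      first
      | exact absurd rfl huw
      | simp [hu, hw, huw, huw.symm])
  omega

lemma VertexToK4.tight220 {G G' : GainGraph} (hG : Tight220 G) (h : VertexToK4 G G') :
    Tight220 G' := by
  classical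
  obtain ⟨v, a, b, c, d, fV, fE, k, rep, hne, hfV, hfVK, hsurjV, hfE, hends, hgain, hk, k0, k1, k2,
    k3, k4, k5, kgain, hrep, hrepE, hsurjE, hfEk, hfErep, hkrep⟩ := h
  set K : Finset G'.V := {a, b, c, d} with hK
  have mem_K : ∀ {y}, y ∈ K ↔ y = a ∨ y = b ∨ y = c ∨ y = d := by simp [hK]
  have hfVK' : ∀ u, fV u ∉ K := by
    intro u hu
    have := hfVK u
    rw [mem_K] at hu
    tauto
  have hsurjV' : ∀ v', v' ∉ K → ∃ u, fV u = v' := by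
    intro v' hv'
    simp only [mem_K, not_or] at hv'
    exact hsurjV v' hv'.1 hv'.2.1 hv'.2.2.1 hv'.2.2.2
  have hπ : ∀ v', ∃ u, v' ∈ K ∧ u = v ∨ ∃ h : u ≠ v, fV ⟨u, h⟩ = v' := by
    intro v'
    by_cases h : v' ∈ K
    · exact ⟨v, Or.inl ⟨h, rfl⟩⟩
    · obtain ⟨u, hu⟩ := hsurjV' v' h
      exact ⟨u.1, Or.inr ⟨u.2, hu⟩⟩
  choose π hπ using hπ
  have πK : ∀ y ∈ K, π y = v := fun y hy => (hπ y).elim (fun h => h.2) fun ⟨h, h'⟩ =>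
    absurd (h' ▸ hy) (hfVK' _)
  have πf : ∀ u, π (fV u) = u.1 := fun u => (hπ (fV u)).elim (fun h => absurd h.1 (hfVK' u))
    fun ⟨h, h'⟩ => congrArg Subtype.val (hfV h')
  let φ : G.E → G'.E := fun e => if h : v ∈ G.ends e then rep ⟨e, h⟩ else fE ⟨e, h⟩
  have hφ : Function.Injective φ := by
    intro e e' hee
    by_cases h : v ∈ G.ends e <;> by_cases h' : v ∈ G.ends e' <;>
      simp only [φ, h, h', dite_true, dite_false] at hee
    · exact congrArg Subtype.val (hrep hee)
    · exact absurd hee.symm (hfErep _ _)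
    · exact absurd hee (hfErep _ _)
    · exact congrArg Subtype.val (hfE hee)
  have hφC : ∀ e, φ e ∉ Finset.univ.image k := by
    intro e he
    obtain ⟨i, -, hi⟩ := Finset.mem_image.1 he
    by_cases h : v ∈ G.ends e <;> simp only [φ, h, dite_true, dite_false] at hi
    · exact hkrep _ _ hi
    · exact hfEk _ _ hi.symm
  have hφsurj : ∀ e', e' ∉ Finset.univ.image k → ∃ e, φ e = e' := by
    intro e' he'
    rcases hsurjE e' with ⟨e, rfl⟩ | ⟨i, rfl⟩ | ⟨e, rfl⟩
    · exact ⟨e.1, by simp [φ, e.2]⟩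
    · exact absurd (Finset.mem_image_of_mem _ (Finset.mem_univ i)) he'
    · exact ⟨e.1, by simp [φ, e.2]⟩
  have hφc : ∀ e, Sym2.map π (G'.ends (φ e)) = G.ends e ∧ G'.gain (φ e) = G.gain e := by
    intro e
    by_cases h : v ∈ G.ends e
    · simp only [φ, h, dite_true]
      obtain ⟨u, hu⟩ := exists_ends_eq h
      by_cases huv : u = v
      · subst huv
        have hdiag : (G.ends e).IsDiag := by simp [hu]
        obtain ⟨h1, w, z, hw, hz, h2⟩ := (hrepE ⟨e, h⟩).2 hdiag
        exact ⟨by rw [h2, Sym2.map_mk, πK w (mem_K.2 hw), πK z (mem_K.2 hz), hu],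
          by rw [h1, G.loop_gain e hdiag]⟩
      · obtain ⟨h1, y, hy, h2⟩ := (hrepE ⟨e, h⟩).1 u huv hu
        exact ⟨by rw [h2, Sym2.map_mk, πK y (mem_K.2 hy), πf, hu], h1⟩
    · simp only [φ, h, dite_false]
      refine ⟨?_, hgain _⟩
      obtain ⟨⟨x, y⟩, hx⟩ := Quot.exists_rep (G.ends e)
      replace hx : G.ends e = s(x, y) := hx.symm
      have h' := h
      simp only [hx, Sym2.mem_iff, not_or] at h'
      rw [hends ⟨e, h⟩ x y (Ne.symm h'.1) (Ne.symm h'.2) hx, Sym2.map_mk, πf, πf, hx]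
  let P : Finset G'.E → Finset G.E := fun F => Finset.univ.filter fun e => φ e ∈ F
  have hP : ∀ F, ∀ e ∈ P F,
      ∃ e' ∈ F, Sym2.map π (G'.ends e') = G.ends e ∧ G'.gain e' = G.gain e :=
    fun F e he => ⟨φ e, (Finset.mem_filter.1 he).2, hφc e⟩
  have card_P : ∀ F : Finset G'.E, F.card ≤ (P F).card + (F ∩ Finset.univ.image k).card :=
    card_le_card_filter_add_card_inter _ hφsurj
  have card_T : ∀ F, ((vertsOf G' F).image π).card + (vertsOf G' F ∩ K).card ≤
      (vertsOf G' F).card + 1 := by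
    intro F
    have h2 : (vertsOf G' F).image π ⊆ insert v ((vertsOf G' F \ K).image π) := by
      intro x hx
      obtain ⟨u, hu, rfl⟩ := Finset.mem_image.1 hx
      by_cases h : u ∈ K
      · simp [πK u h]
      · exact Finset.mem_insert_of_mem
          (Finset.mem_image_of_mem _ (Finset.mem_sdiff.2 ⟨hu, h⟩))
    have h3 := (Finset.card_le_card h2).trans (Finset.card_insert_le _ _)
    have h4 := Finset.card_image_le (s := vertsOf G' F \ K) (f := π)
    have h5 := Finset.card_sdiff_add_card_inter (vertsOf G' F) K
    omega
  have card_T' : ∀ F, ((vertsOf G' F).image π).card ≤ (vertsOf G' F).card :=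
    fun F => Finset.card_image_le
  have fib : ∀ u w, π u = π w → u = w ∨ u ∈ K ∧ w ∈ K := by
    intro u w huw
    rcases hπ u with ⟨hu, hu'⟩ | ⟨hu, hu'⟩ <;> rcases hπ w with ⟨hw, hw'⟩ | ⟨hw, hw'⟩
    · exact Or.inr ⟨hu, hw⟩
    · exact absurd (huw.symm.trans hu') hw
    · exact absurd (huw.trans hw') hu
    · left
      rw [← hu', ← hw']
      congr 2
  have hedge : ∀ {F : Finset G'.E} {e x y}, G'.ends e = s(x, y) → e ∈ F →
      x ∈ vertsOf G' F ∧ y ∈ vertsOf G' F := fun hxy he =>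
    ⟨mem_vertsOf_of_ends he hxy, mem_vertsOf.2 ⟨_, he, by simp [hxy]⟩⟩
  have hcount : ∀ F, (F ∩ Finset.univ.image k).card + 2 * ((vertsOf G' F).image π).card ≤
      2 * (vertsOf G' F).card := by
    intro F
    have aux : ∀ {i x y}, G'.ends (k i) = s(x, y) → k i ∈ F →
        x ∈ vertsOf G' F ∧ y ∈ vertsOf G' F ∧ true = true :=
      fun hxy he => ⟨(hedge hxy he).1, (hedge hxy he).2, rfl⟩
    have h1 := (card_k4_le hne (fun _ => true) (aux k0) (aux k1) (aux k2) (aux k3) (aux k4)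
      (aux k5)).1
    have h2 := card_T F
    rw [hK] at h2
    have h3 := card_T' F
    rcases h1 with h1 | h1 <;> omega
  constructor
  · refine hG.1.of_reduction (fun F => ?_) fun F σ hF hσ => ?_
    · refine ⟨P F, _, ends_mem_image_of_contract (hP F), ?_⟩
      have := card_P F
      have := hcount F
      omega
    · refine ⟨P F, _, ends_mem_image_of_contract (hP F), ?_⟩
      have hT := (vertsOf_nonempty hF).image π
      have h1 := card_P F
      by_cases hs : ∀ u ∈ vertsOf G' F ∩ K, ∀ w ∈ vertsOf G' F ∩ K, σ u = σ w
      · refine Or.inl ⟨hT, hσ.exists_of_contract (hP F) fun u hu w hw huw => ?_, ?_⟩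
        · rcases fib u w huw with rfl | ⟨hu', hw'⟩
          · rfl
          · exact hs u (Finset.mem_inter.2 ⟨hu, hu'⟩) w (Finset.mem_inter.2 ⟨hw, hw'⟩)
        · have := hcount F
          omega
      · refine Or.inr ?_
        have aux : ∀ {i x y}, G'.ends (k i) = s(x, y) → k i ∈ F →
            x ∈ vertsOf G' F ∧ y ∈ vertsOf G' F ∧ decide (σ x = 1) = decide (σ y = 1) := by
          intro i x y hxy he
          refine ⟨(hedge hxy he).1, (hedge hxy he).2, ?_⟩
          have h2 := hσ _ he _ _ hxy
          rw [kgain i] at h2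
          have h3 : σ x = σ y := by
            rw [← mul_left_inj (σ y), ← h2, Int.units_mul_self]
          rw [h3]
        push Not at hs
        obtain ⟨u, hu, w, hw, huw⟩ := hs
        have h2 := (card_k4_le hne (fun x => decide (σ x = 1)) (aux k0) (aux k1) (aux k2) (aux k3)
          (aux k4) (aux k5)).2 ⟨u, hu, w, hw, fun h => huw ?_⟩
        · have h3 := card_T F
          rw [hK] at h3
          omega
        · rcases Int.units_eq_one_or (σ u) with h3 | h3 <;>
            rcases Int.units_eq_one_or (σ w) with h4 | h4 <;> simp_all
  · have hV := card_eq_card_add_of_injective hfV K hfVK' hsurjV'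
    have hE := card_eq_card_add_of_injective hφ (Finset.univ.image k) hφC hφsurj
    have hV' : Fintype.card {u // u ≠ v} + 1 = Fintype.card G.V := by
      have h1 : 0 < Fintype.card G.V := Fintype.card_pos_iff.2 ⟨v⟩
      rw [Fintype.card_subtype_compl, Fintype.card_subtype_eq]
      omega
    have hK4 : K.card = 4 := by
      obtain ⟨hab, hac, had, hbc, hbd, hcd⟩ := hne
      simp [hK, hab, hac, had, hbc, hbd, hcd]
    rw [Finset.card_image_of_injective _ hk, Finset.card_univ, Fintype.card_fin] at hE
    have := hG.2
    omega

theorem moves_preserve_tight (G G' : GainGraph)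
    (htight : Tight220 G) (hmove : IsMove G G') :
    Tight220 G' := by
  rcases hmove with h | h | h | h | h | h | h | h | h | h | h | h | h | h
  exacts [h.tight220 htight, h.tight220 htight, h.tight220 htight, h.tight220 htight,
    h.tight220 htight, h.tight220 htight, h.tight220 htight, h.tight220 htight,
    h.tight220 htight, h.tight220 htight, h.tight220 htight, h.tight220 htight,
    h.tight220 htight, h.tight220 htight]

end ZGain
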